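/- Let α,β > −1/2 with β − α > −3, and let 0 < ε < π/2. Then there exist constants c⁽¹⁾ > 0 depending only on α,β and C > 0 depending only on ε,α,β such that for every positive integer L and every θ with ε ≤ θ < π − c⁽¹⁾/L, setting L̃ := L + (α+β+2)/2 and θ' := π − θ, |v_L^{(α,β)}(1,cos θ) − ((−1)^L 2^{−(α+β+1)}/Γ(α+1)) L̃^{α+1/2} m_{β,α+1}(θ') [cos ω_β(L̃θ') + L̃^{−1} F^{(2)}_{β,α+1}(θ') cos ω_{β+1}(L̃θ')]| ≤ C (2^{−(α+β+1)}/Γ(α+1)) L̃^{α+1/2} m_{β,α+1}(θ') (L^{û(β)} θ'^{ν̂(β)} + L^{−2} θ'^{−2}), where F^{(2)}_{γ,η}(θ) := ((η²−γ²)/4) tan(θ/2) − ((4γ²−1)/8) cot θ, û(γ) := −2 + frac(γ+1/2) (frac denotes fractional part), and ν̂(γ) := γ+5/2 if γ < 1/2 and ν̂(γ) := γ+1/2 if γ ≥ 1/2. -/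

import Mathlib

open MeasureTheory Real
open scoped ENNReal NNReal

/-- The classical Jacobi polynomial `P_n^{(a,b)}` (hypergeometric representation,
normalised so that `P_n^{(a,b)}(1) = Γ(n+a+1)/(Γ(n+1)Γ(a+1))`). -/
noncomputable def jacobiP (a b : ℝ) (n : ℕ) (x : ℝ) : ℝ :=
  ∑ s ∈ Finset.range (n + 1),
    (Real.Gamma ((n : ℝ) + a + 1) /
        (Real.Gamma ((s : ℝ) + a + 1) * (Nat.factorial (n - s) : ℝ))) *
      (Real.Gamma ((n : ℝ) + b + 1) /
        (Real.Gamma ((n : ℝ) - (s : ℝ) + b + 1) * (Nat.factorial s : ℝ))) *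
      ((x - 1) / 2) ^ s * ((x + 1) / 2) ^ (n - s)

/-- `M_ℓ^{(a,b)}`, the `L₂(w_{a,b})` normalisation constant of `P_ℓ^{(a,b)}`. -/
noncomputable def jacobiM (a b : ℝ) (ℓ : ℕ) : ℝ :=
  (2 : ℝ) ^ (a + b + 1) / (2 * (ℓ : ℝ) + a + b + 1) *
    (Real.Gamma ((ℓ : ℝ) + a + 1) * Real.Gamma ((ℓ : ℝ) + b + 1)) /
    (Real.Gamma ((ℓ : ℝ) + 1) * Real.Gamma ((ℓ : ℝ) + a + b + 1))

/-- The generalised Dirichlet kernel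
`v_L^{(a,b)}(t,s) = Σ_{ℓ=0}^{L} (M_ℓ^{(a,b)})⁻¹ P_ℓ^{(a,b)}(t) P_ℓ^{(a,b)}(s)`. -/
noncomputable def dirichletJ (a b : ℝ) (L : ℕ) (t s : ℝ) : ℝ :=
  ∑ ℓ ∈ Finset.range (L + 1), (jacobiM a b ℓ)⁻¹ * jacobiP a b ℓ t * jacobiP a b ℓ s

/-- The filtered Jacobi kernel
`v_{L,g}^{(a,b)}(t,s) = Σ_{ℓ=0}^{2L−1} g(ℓ/L) (M_ℓ^{(a,b)})⁻¹ P_ℓ^{(a,b)}(t) P_ℓ^{(a,b)}(s)`. -/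
noncomputable def filteredJ (a b : ℝ) (g : ℝ → ℝ) (L : ℕ) (t s : ℝ) : ℝ :=
  ∑ ℓ ∈ Finset.range (2 * L),
    g ((ℓ : ℝ) / (L : ℝ)) * (jacobiM a b ℓ)⁻¹ * jacobiP a b ℓ t * jacobiP a b ℓ s

/-- `Z(d,ℓ)`, the dimension of the space of spherical harmonics of degree `ℓ` on `S^d`. -/
noncomputable def Zdim (d ℓ : ℕ) : ℝ :=
  (2 * (ℓ : ℝ) + (d : ℝ) - 1) * Real.Gamma ((ℓ : ℝ) + (d : ℝ) - 1) /
    (Real.Gamma (d : ℝ) * Real.Gamma ((ℓ : ℝ) + 1))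

/-- The normalised Legendre polynomial `P_ℓ^{(d+1)}` for `S^d`. -/
noncomputable def normLegendre (d ℓ : ℕ) (t : ℝ) : ℝ :=
  jacobiP (((d : ℝ) - 2) / 2) (((d : ℝ) - 2) / 2) ℓ t /
    jacobiP (((d : ℝ) - 2) / 2) (((d : ℝ) - 2) / 2) ℓ 1

/-- The Dirichlet kernel on `S^d`: `v_L^{(d)}(t) = Σ_{ℓ=0}^L Z(d,ℓ) P_ℓ^{(d+1)}(t)`. -/
noncomputable def sphDirichlet (d L : ℕ) (t : ℝ) : ℝ :=
  ∑ ℓ ∈ Finset.range (L + 1), Zdim d ℓ * normLegendre d ℓ t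

/-- The filtered kernel on `S^d`: `v_{L,g}^{(d)}(t) = Σ_{ℓ=0}^∞ g(ℓ/L) Z(d,ℓ) P_ℓ^{(d+1)}(t)`. -/
noncomputable def sphFiltered (d : ℕ) (g : ℝ → ℝ) (L : ℕ) (t : ℝ) : ℝ :=
  ∑' ℓ : ℕ, g ((ℓ : ℝ) / (L : ℝ)) * Zdim d ℓ * normLegendre d ℓ t

/-- The surface area `|S^n| = 2π^{(n+1)/2}/Γ((n+1)/2)` of the unit sphere `S^n`. -/
noncomputable def sphereArea (n : ℕ) : ℝ :=
  2 * Real.pi ^ (((n : ℝ) + 1) / 2) / Real.Gamma (((n : ℝ) + 1) / 2)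

/-- `m_{a,b}(θ) = π^{−1/2} (sin(θ/2))^{−a−1/2} (cos(θ/2))^{−b−1/2}`. -/
noncomputable def mAB (a b θ : ℝ) : ℝ :=
  Real.pi ^ (-(1 / 2 : ℝ)) * Real.sin (θ / 2) ^ (-a - 1 / 2) *
    Real.cos (θ / 2) ^ (-b - 1 / 2)

/-- `ω_γ(z) = z − γπ/2 − π/4`. -/
noncomputable def omegaA (γ z : ℝ) : ℝ := z - γ * Real.pi / 2 - Real.pi / 4

/-- `F^{(2)}_{a,b}(θ) = ((b²−a²)/4) tan(θ/2) − ((4a²−1)/8) cot θ`. -/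
noncomputable def F2fn (a b θ : ℝ) : ℝ :=
  (b ^ 2 - a ^ 2) / 4 * Real.tan (θ / 2) - (4 * a ^ 2 - 1) / 8 * (Real.cos θ / Real.sin θ)

/-- `û(a) = −2 + frac(a + 1/2)`. -/
noncomputable def uHat (a : ℝ) : ℝ := -2 + Int.fract (a + 1 / 2)

/-- `ν̂(a) = a + 5/2` if `a < 1/2`, and `a + 1/2` if `a ≥ 1/2`. -/
noncomputable def nuHat (a : ℝ) : ℝ := if a < 1 / 2 then a + 5 / 2 else a + 1 / 2

/-- coefficient of `X^i Y^j` in the Jacobi polynomial -/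
noncomputable def jc (a b : ℝ) (i j : ℕ) : ℝ :=
  (Real.Gamma ((i : ℝ) + j + a + 1) / (Real.Gamma ((i : ℝ) + a + 1) * (Nat.factorial j : ℝ))) *
    (Real.Gamma ((i : ℝ) + j + b + 1) / (Real.Gamma ((j : ℝ) + b + 1) * (Nat.factorial i : ℝ)))

lemma jacobiP_eq (a b : ℝ) (n : ℕ) (x : ℝ) :
    jacobiP a b n x = ∑ p ∈ Finset.HasAntidiagonal.antidiagonal n,
      jc a b p.1 p.2 * (((x - 1) / 2) ^ p.1 * ((x + 1) / 2) ^ p.2) := by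
  rw [Finset.Nat.sum_antidiagonal_eq_sum_range_succ_mk]
  unfold jacobiP
  refine Finset.sum_congr rfl fun s hs => ?_
  have hs' : s ≤ n := by simpa [Nat.lt_succ_iff] using hs
  simp only [jc]
  have e : ((n - s : ℕ) : ℝ) = (n : ℝ) - s := by push_cast [hs']; ring
  rw [e]
  have e2 : (s : ℝ) + ((n : ℝ) - s) = n := by ring
  rw [e2]; ring

lemma jacobiP_neg (a b : ℝ) (n : ℕ) (x : ℝ) :
    jacobiP a b n (-x) = (-1) ^ n * jacobiP b a n x := by
  rw [jacobiP_eq, jacobiP_eq, ← Finset.Nat.sum_antidiagonal_swap, Finset.mul_sum]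
  refine Finset.sum_congr rfl fun p hp => ?_
  have hp' : p.1 + p.2 = n := by simpa using hp
  subst hp'
  simp only [Prod.fst_swap, Prod.snd_swap, jc]
  have e1 : (-x - 1) / 2 = (-1) * ((x + 1) / 2) := by ring
  have e2 : (-x + 1) / 2 = (-1) * ((x - 1) / 2) := by ring
  rw [e1, e2, mul_pow, mul_pow, pow_add, add_comm (p.2 : ℝ) (p.1 : ℝ)]
  ring

lemma Gs {x y : ℝ} (hx : 0 < x) (h : y = x + 1) : Real.Gamma y = x * Real.Gamma x := by
  rw [h, Real.Gamma_add_one hx.ne']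

lemma jacobi_contig (a b : ℝ) (ha : -1 < a) (hb : -1 < b) (n : ℕ) (x : ℝ) :
    (2 * ((n : ℝ) + 1) + a + b + 1) * jacobiP a b (n + 1) x =
      ((n : ℝ) + 1 + a + b + 1) * jacobiP (a + 1) b (n + 1) x -
        ((n : ℝ) + 1 + b) * jacobiP (a + 1) b n x := by
  set X := (x - 1) / 2 with hX
  set Y := (x + 1) / 2 with hY
  have hXY : Y - X = 1 := by rw [hX, hY]; ring
  have h1 : ((n : ℝ) + 1 + b) * (Y * jacobiP (a + 1) b n x) =
      ∑ p ∈ Finset.HasAntidiagonal.antidiagonal (n + 1),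
        (p.2 : ℝ) * (p.2 + b) / (p.1 + a + 1) * jc a b p.1 p.2 * (X ^ p.1 * Y ^ p.2) := by
    rw [Finset.Nat.sum_antidiagonal_succ', jacobiP_eq, Finset.mul_sum, Finset.mul_sum]
    simp only [Nat.cast_zero, zero_mul, zero_div, zero_add]
    refine Finset.sum_congr rfl fun p hp => ?_
    have hp' : p.1 + p.2 = n := by simpa using hp
    have hn : (n : ℝ) = p.1 + p.2 := by exact_mod_cast hp'.symm
    obtain ⟨i, j⟩ := p
    simp only [jc] at *
    have hi : (0 : ℝ) ≤ i := Nat.cast_nonneg i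
    have hj : (0 : ℝ) ≤ j := Nat.cast_nonneg j
    have g1 : 0 < (i : ℝ) + a + 1 := by linarith
    have g2 : 0 < (j : ℝ) + b + 1 := by linarith
    have g3 : 0 < (i : ℝ) + j + b + 1 := by linarith
    rw [Gs g1 (y := (i : ℝ) + (a + 1) + 1) (by ring),
      Gs g2 (y := ((j + 1 : ℕ) : ℝ) + b + 1) (by push_cast; ring),
      Gs g3 (y := (i : ℝ) + ((j + 1 : ℕ) : ℝ) + b + 1) (by push_cast; ring), Nat.factorial_succ, hn]
    have e : (i : ℝ) + j + (a + 1) + 1 = (i : ℝ) + ((j + 1 : ℕ) : ℝ) + a + 1 := by push_cast; ring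
    rw [e]
    have := (Real.Gamma_pos_of_pos g1).ne'
    have := (Real.Gamma_pos_of_pos g2).ne'
    have : (j.factorial : ℝ) ≠ 0 := by positivity
    have : (i.factorial : ℝ) ≠ 0 := by positivity
    push_cast
    field_simp
    ring
  have h2 : ((n : ℝ) + 1 + b) * (X * jacobiP (a + 1) b n x) =
      ∑ p ∈ Finset.HasAntidiagonal.antidiagonal (n + 1),
        (p.1 : ℝ) * jc a b p.1 p.2 * (X ^ p.1 * Y ^ p.2) := by
    rw [Finset.Nat.sum_antidiagonal_succ, jacobiP_eq, Finset.mul_sum, Finset.mul_sum]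
    simp only [Nat.cast_zero, zero_mul, zero_add]
    refine Finset.sum_congr rfl fun p hp => ?_
    have hp' : p.1 + p.2 = n := by simpa using hp
    have hn : (n : ℝ) = p.1 + p.2 := by exact_mod_cast hp'.symm
    obtain ⟨i, j⟩ := p
    simp only [jc] at *
    have hi : (0 : ℝ) ≤ i := Nat.cast_nonneg i
    have hj : (0 : ℝ) ≤ j := Nat.cast_nonneg j
    have g2 : 0 < (j : ℝ) + b + 1 := by linarith
    have g1 : 0 < (i : ℝ) + a + 1 := by linarith
    have g3 : 0 < (i : ℝ) + j + b + 1 := by linarith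
    rw [Gs g3 (y := ((i + 1 : ℕ) : ℝ) + j + b + 1) (by push_cast; ring), Nat.factorial_succ, hn]
    have e : (i : ℝ) + j + (a + 1) + 1 = ((i + 1 : ℕ) : ℝ) + j + a + 1 := by push_cast; ring
    have e' : (i : ℝ) + (a + 1) + 1 = ((i + 1 : ℕ) : ℝ) + a + 1 := by push_cast; ring
    rw [e, e']
    have := (Real.Gamma_pos_of_pos (show 0 < ((i + 1 : ℕ) : ℝ) + a + 1 by push_cast; linarith)).ne'
    have := (Real.Gamma_pos_of_pos g2).ne'
    have : (j.factorial : ℝ) ≠ 0 := by positivity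
    have : (i.factorial : ℝ) ≠ 0 := by positivity
    push_cast
    rw [← hX, ← hY, pow_succ]
    field_simp
    ring
  have h3 : ((n : ℝ) + 1 + b) * jacobiP (a + 1) b n x =
      ((n : ℝ) + 1 + b) * (Y * jacobiP (a + 1) b n x) -
        ((n : ℝ) + 1 + b) * (X * jacobiP (a + 1) b n x) := by
    linear_combination (-((n : ℝ) + 1 + b) * jacobiP (a + 1) b n x) * hXY
  rw [h3, h1, h2, jacobiP_eq, jacobiP_eq, Finset.mul_sum, Finset.mul_sum, ← Finset.sum_sub_distrib,
    ← Finset.sum_sub_distrib]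
  refine Finset.sum_congr rfl fun p hp => ?_
  have hp' : p.1 + p.2 = n + 1 := by simpa using hp
  have hn : (n : ℝ) = p.1 + p.2 - 1 := by
    have : (p.1 : ℝ) + p.2 = n + 1 := by exact_mod_cast hp'
    linarith
  obtain ⟨i, j⟩ := p
  simp only [jc] at *
  have hi : (0 : ℝ) ≤ i := Nat.cast_nonneg i
  have hj : (0 : ℝ) ≤ j := Nat.cast_nonneg j
  have g1 : 0 < (i : ℝ) + a + 1 := by linarith
  have g2 : 0 < (j : ℝ) + b + 1 := by linarith
  have g3 : 0 < (i : ℝ) + j + a + 1 := by linarith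
  rw [Gs g1 (y := (i : ℝ) + (a + 1) + 1) (by ring),
    Gs g3 (y := (i : ℝ) + j + (a + 1) + 1) (by ring), hn]
  have := (Real.Gamma_pos_of_pos g1).ne'
  have := (Real.Gamma_pos_of_pos g2).ne'
  have : (j.factorial : ℝ) ≠ 0 := by positivity
  have : (i.factorial : ℝ) ≠ 0 := by positivity
  field_simp
  ring

lemma jacobiP_one (a b : ℝ) (hb : -1 < b) (n : ℕ) :
    jacobiP a b n 1 = Real.Gamma ((n : ℝ) + a + 1) / (Real.Gamma (a + 1) * (Nat.factorial n : ℝ)) := by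
  unfold jacobiP
  rw [Finset.sum_eq_single 0]
  · have : 0 < Real.Gamma ((n : ℝ) + b + 1) :=
      Real.Gamma_pos_of_pos (by have : (0 : ℝ) ≤ n := Nat.cast_nonneg n; linarith)
    simp
    rw [div_self this.ne']; simp
  · intro s _ hs
    simp [hs]
  · simp

lemma dirichletJ_eq (a b : ℝ) (ha : -(1 / 2 : ℝ) < a) (hb : -(1 / 2 : ℝ) < b) (L : ℕ) (x : ℝ) :
    dirichletJ a b L 1 x = (2 : ℝ) ^ (-(a + b + 1)) / Real.Gamma (a + 1) *
      (Real.Gamma ((L : ℝ) + a + b + 2) / Real.Gamma ((L : ℝ) + b + 1) *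
        jacobiP (a + 1) b L x) := by
  have hterm : ∀ ℓ : ℕ, (jacobiM a b ℓ)⁻¹ * jacobiP a b ℓ 1 =
      (2 : ℝ) ^ (-(a + b + 1)) / Real.Gamma (a + 1) *
        ((2 * (ℓ : ℝ) + a + b + 1) * Real.Gamma ((ℓ : ℝ) + a + b + 1) / Real.Gamma ((ℓ : ℝ) + b + 1)) := by
    intro ℓ
    have hl : (0 : ℝ) ≤ ℓ := Nat.cast_nonneg ℓ
    rw [jacobiP_one a b (by linarith), jacobiM, Real.rpow_neg (by norm_num),
      ← Real.Gamma_nat_eq_factorial]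
    have := (Real.Gamma_pos_of_pos (show 0 < (ℓ : ℝ) + a + 1 by linarith)).ne'
    have := (Real.Gamma_pos_of_pos (show 0 < (ℓ : ℝ) + b + 1 by linarith)).ne'
    have := (Real.Gamma_pos_of_pos (show 0 < (ℓ : ℝ) + 1 by linarith)).ne'
    have := (Real.Gamma_pos_of_pos (show 0 < a + 1 by linarith)).ne'
    have := (Real.Gamma_pos_of_pos (show 0 < (ℓ : ℝ) + a + b + 1 by linarith)).ne'
    have : (2 : ℝ) ^ (a + b + 1) ≠ 0 := by positivity
    have : 2 * (ℓ : ℝ) + a + b + 1 ≠ 0 := by linarith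
    field_simp
  induction L with
  | zero =>
    simp only [dirichletJ, zero_add, Finset.sum_range_one]
    rw [hterm]
    have h1 := (Real.Gamma_pos_of_pos (show 0 < b + 1 by linarith)).ne'
    have h2 := (Real.Gamma_pos_of_pos (show 0 < a + 1 by linarith)).ne'
    have h3 := (Real.Gamma_pos_of_pos (show 0 < a + 1 + 1 by linarith)).ne'
    have e : a + b + 2 = a + b + 1 + 1 := by ring
    simp [jacobiP]
    rw [e, Real.Gamma_add_one (show a + b + 1 ≠ 0 by linarith), div_self h1, div_self h2, div_self h3]
    ring
  | succ n ih =>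
    have hl : (0 : ℝ) ≤ n := Nat.cast_nonneg n
    have : dirichletJ a b (n + 1) 1 x = dirichletJ a b n 1 x +
        (jacobiM a b (n + 1))⁻¹ * jacobiP a b (n + 1) 1 * jacobiP a b (n + 1) x := by
      simp only [dirichletJ]; rw [Finset.sum_range_succ]
    rw [this, ih, hterm]
    have hc := jacobi_contig a b (by linarith) (by linarith) n x
    push_cast at *
    have g1 : 0 < (n : ℝ) + b + 1 := by linarith
    have g2 : 0 < (n : ℝ) + a + b + 2 := by linarith
    rw [Gs g1 (y := (n : ℝ) + 1 + b + 1) (by ring), Gs g2 (y := (n : ℝ) + 1 + a + b + 2) (by ring)]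
    have e : (n : ℝ) + 1 + a + b + 1 = n + a + b + 2 := by ring
    rw [e] at *
    have := (Real.Gamma_pos_of_pos g1).ne'
    have := (Real.Gamma_pos_of_pos g2).ne'
    have := (Real.Gamma_pos_of_pos (show 0 < a + 1 by linarith)).ne'
    field_simp
    linear_combination hc

lemma jacobi_deriv (a b : ℝ) (ha : -1 < a) (hb : -1 < b) (n : ℕ) (x : ℝ) :
    HasDerivAt (jacobiP a b (n + 1))
      (((n : ℝ) + 1 + a + b + 1) / 2 * jacobiP (a + 1) (b + 1) n x) x := by
  have hfun : jacobiP a b (n + 1) = fun x => ∑ p ∈ Finset.HasAntidiagonal.antidiagonal (n + 1),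
      jc a b p.1 p.2 * (((x - 1) / 2) ^ p.1 * ((x + 1) / 2) ^ p.2) := by
    funext x; exact jacobiP_eq a b (n + 1) x
  rw [hfun]
  have hd : HasDerivAt (fun x => ∑ p ∈ Finset.HasAntidiagonal.antidiagonal (n + 1),
      jc a b p.1 p.2 * (((x - 1) / 2) ^ p.1 * ((x + 1) / 2) ^ p.2))
      (∑ p ∈ Finset.HasAntidiagonal.antidiagonal (n + 1), jc a b p.1 p.2 *
        (((p.1 : ℝ) * ((x - 1) / 2) ^ (p.1 - 1) * (1 / 2)) * ((x + 1) / 2) ^ p.2 +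
          ((x - 1) / 2) ^ p.1 * ((p.2 : ℝ) * ((x + 1) / 2) ^ (p.2 - 1) * (1 / 2)))) x := by
    refine HasDerivAt.fun_sum fun p _ => ?_
    have h1 : HasDerivAt (fun x : ℝ => (x - 1) / 2) (1 / 2) x :=
      ((hasDerivAt_id x).sub_const 1).div_const 2
    have h2 : HasDerivAt (fun x : ℝ => (x + 1) / 2) (1 / 2) x :=
      ((hasDerivAt_id x).add_const 1).div_const 2
    exact ((h1.pow p.1).mul (h2.pow p.2)).const_mul _
  refine hd.congr_deriv ?_
  simp only [mul_add, Finset.sum_add_distrib]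
  rw [Finset.Nat.sum_antidiagonal_succ, Finset.Nat.sum_antidiagonal_succ', jacobiP_eq,
    Finset.mul_sum]
  simp only [Nat.cast_zero, zero_mul, mul_zero, zero_add]
  rw [← Finset.sum_add_distrib]
  refine Finset.sum_congr rfl fun p hp => ?_
  have hp' : p.1 + p.2 = n := by simpa using hp
  have hn : (n : ℝ) = p.1 + p.2 := by exact_mod_cast hp'.symm
  obtain ⟨i, j⟩ := p
  simp only [jc, Nat.add_sub_cancel] at *
  have hi : (0 : ℝ) ≤ i := Nat.cast_nonneg i
  have hj : (0 : ℝ) ≤ j := Nat.cast_nonneg j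
  have g1 : 0 < (i : ℝ) + a + 1 := by linarith
  have g2 : 0 < (j : ℝ) + b + 1 := by linarith
  have g3 : 0 < (i : ℝ) + j + a + 1 := by linarith
  have g4 : 0 < (i : ℝ) + j + b + 1 := by linarith
  rw [Gs g1 (y := (i : ℝ) + (a + 1) + 1) (by ring),
    Gs g1 (y := ((i + 1 : ℕ) : ℝ) + a + 1) (by push_cast; ring),
    Gs g2 (y := (j : ℝ) + (b + 1) + 1) (by ring),
    Gs g2 (y := ((j + 1 : ℕ) : ℝ) + b + 1) (by push_cast; ring),
    Gs g3 (y := (i : ℝ) + j + (a + 1) + 1) (by ring),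
    Gs g3 (y := ((i + 1 : ℕ) : ℝ) + j + a + 1) (by push_cast; ring),
    Gs g3 (y := (i : ℝ) + ((j + 1 : ℕ) : ℝ) + a + 1) (by push_cast; ring),
    Gs g4 (y := (i : ℝ) + j + (b + 1) + 1) (by ring),
    Gs g4 (y := ((i + 1 : ℕ) : ℝ) + j + b + 1) (by push_cast; ring),
    Gs g4 (y := (i : ℝ) + ((j + 1 : ℕ) : ℝ) + b + 1) (by push_cast; ring), hn,
    Nat.factorial_succ, Nat.factorial_succ]
  have := (Real.Gamma_pos_of_pos g1).ne'
  have := (Real.Gamma_pos_of_pos g2).ne'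
  have : (j.factorial : ℝ) ≠ 0 := by positivity
  have : (i.factorial : ℝ) ≠ 0 := by positivity
  push_cast
  field_simp
  ring

lemma jacobi_differentiable (a b : ℝ) (n : ℕ) : Differentiable ℝ (jacobiP a b n) := by
  unfold jacobiP
  fun_prop

/-- adjoint derivative relation -/
lemma jacobi_adj (a b : ℝ) (ha : -1 < a) (hb : -1 < b) (n : ℕ) (x : ℝ) :
    HasDerivAt (jacobiP (a + 1) (b + 1) n) (deriv (jacobiP (a + 1) (b + 1) n) x) x ∧
    (a + 1) * ((x + 1) / 2) * jacobiP (a + 1) (b + 1) n x +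
      (b + 1) * ((x - 1) / 2) * jacobiP (a + 1) (b + 1) n x +
      2 * ((x - 1) / 2) * ((x + 1) / 2) * deriv (jacobiP (a + 1) (b + 1) n) x =
    ((n : ℝ) + 1) * jacobiP a b (n + 1) x := by
  refine ⟨(jacobi_differentiable _ _ _ x).hasDerivAt, ?_⟩
  have hfun : jacobiP (a + 1) (b + 1) n = fun x => ∑ p ∈ Finset.HasAntidiagonal.antidiagonal n,
      jc (a + 1) (b + 1) p.1 p.2 * (((x - 1) / 2) ^ p.1 * ((x + 1) / 2) ^ p.2) := by
    funext x; exact jacobiP_eq _ _ n x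
  have hd : HasDerivAt (fun x => ∑ p ∈ Finset.HasAntidiagonal.antidiagonal n,
      jc (a + 1) (b + 1) p.1 p.2 * (((x - 1) / 2) ^ p.1 * ((x + 1) / 2) ^ p.2))
      (∑ p ∈ Finset.HasAntidiagonal.antidiagonal n, jc (a + 1) (b + 1) p.1 p.2 *
        (((p.1 : ℝ) * ((x - 1) / 2) ^ (p.1 - 1) * (1 / 2)) * ((x + 1) / 2) ^ p.2 +
          ((x - 1) / 2) ^ p.1 * ((p.2 : ℝ) * ((x + 1) / 2) ^ (p.2 - 1) * (1 / 2)))) x := by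
    refine HasDerivAt.fun_sum fun p _ => ?_
    have h1 : HasDerivAt (fun x : ℝ => (x - 1) / 2) (1 / 2) x :=
      ((hasDerivAt_id x).sub_const 1).div_const 2
    have h2 : HasDerivAt (fun x : ℝ => (x + 1) / 2) (1 / 2) x :=
      ((hasDerivAt_id x).add_const 1).div_const 2
    exact ((h1.pow p.1).mul (h2.pow p.2)).const_mul _
  rw [← hfun] at hd
  rw [hd.deriv, jacobiP_eq, jacobiP_eq]
  set X := (x - 1) / 2
  set Y := (x + 1) / 2
  have hr : ((n : ℝ) + 1) * ∑ p ∈ Finset.HasAntidiagonal.antidiagonal (n + 1),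
      jc a b p.1 p.2 * (X ^ p.1 * Y ^ p.2) =
      ∑ p ∈ Finset.HasAntidiagonal.antidiagonal (n + 1), (p.1 : ℝ) * jc a b p.1 p.2 * (X ^ p.1 * Y ^ p.2) +
      ∑ p ∈ Finset.HasAntidiagonal.antidiagonal (n + 1), (p.2 : ℝ) * jc a b p.1 p.2 * (X ^ p.1 * Y ^ p.2) := by
    rw [Finset.mul_sum, ← Finset.sum_add_distrib]
    refine Finset.sum_congr rfl fun p hp => ?_
    have hp' : p.1 + p.2 = n + 1 := by simpa using hp
    have : (p.1 : ℝ) + p.2 = n + 1 := by exact_mod_cast hp'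
    rw [← this]; ring
  rw [hr, Finset.Nat.sum_antidiagonal_succ, Finset.Nat.sum_antidiagonal_succ']
  simp only [Nat.cast_zero, zero_mul, zero_add]
  rw [Finset.mul_sum, Finset.mul_sum, Finset.mul_sum, ← Finset.sum_add_distrib,
    ← Finset.sum_add_distrib, ← Finset.sum_add_distrib]
  refine Finset.sum_congr rfl fun p hp => ?_
  obtain ⟨i, j⟩ := p
  have k1 : (i : ℝ) * X ^ (i - 1) * X = i * X ^ i := by
    rcases i with _ | i
    · simp
    · simp [pow_succ]; ring
  have k2 : (j : ℝ) * Y ^ (j - 1) * Y = j * Y ^ j := by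
    rcases j with _ | j
    · simp
    · simp [pow_succ]; ring
  have hi : (0 : ℝ) ≤ i := Nat.cast_nonneg i
  have hj : (0 : ℝ) ≤ j := Nat.cast_nonneg j
  have g1 : 0 < (i : ℝ) + a + 1 := by linarith
  have g2 : 0 < (j : ℝ) + b + 1 := by linarith
  have c1 : ((i + 1 : ℕ) : ℝ) * jc a b (i + 1) j = (j + b + 1) * jc (a + 1) (b + 1) i j := by
    simp only [jc]
    have e : ((i + 1 : ℕ) : ℝ) + j + a + 1 = (i : ℝ) + j + (a + 1) + 1 := by push_cast; ring
    have e' : ((i + 1 : ℕ) : ℝ) + j + b + 1 = (i : ℝ) + j + (b + 1) + 1 := by push_cast; ring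
    have e'' : ((i + 1 : ℕ) : ℝ) + a + 1 = (i : ℝ) + (a + 1) + 1 := by push_cast; ring
    rw [e, e', e'', Gs g2 (y := (j : ℝ) + (b + 1) + 1) (by ring), Nat.factorial_succ]
    have := (Real.Gamma_pos_of_pos g2).ne'
    have := (Real.Gamma_pos_of_pos (show 0 < (i : ℝ) + (a + 1) + 1 by linarith)).ne'
    push_cast
    field_simp
  have c2 : ((j + 1 : ℕ) : ℝ) * jc a b i (j + 1) = (i + a + 1) * jc (a + 1) (b + 1) i j := by
    simp only [jc]
    have e : (i : ℝ) + ((j + 1 : ℕ) : ℝ) + a + 1 = (i : ℝ) + j + (a + 1) + 1 := by push_cast; ring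
    have e' : (i : ℝ) + ((j + 1 : ℕ) : ℝ) + b + 1 = (i : ℝ) + j + (b + 1) + 1 := by push_cast; ring
    have e'' : ((j + 1 : ℕ) : ℝ) + b + 1 = (j : ℝ) + (b + 1) + 1 := by push_cast; ring
    rw [e, e', e'', Gs g1 (y := (i : ℝ) + (a + 1) + 1) (by ring), Nat.factorial_succ]
    have := (Real.Gamma_pos_of_pos g1).ne'
    have := (Real.Gamma_pos_of_pos (show 0 < (j : ℝ) + (b + 1) + 1 by linarith)).ne'
    push_cast
    field_simp
  dsimp only
  rw [c1, c2, pow_succ, pow_succ]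
  linear_combination (jc (a + 1) (b + 1) i j * Y ^ j * Y) * k1 +
    (jc (a + 1) (b + 1) i j * X ^ i * X) * k2

/-- Liouville weight -/
noncomputable def jw (γ η φ : ℝ) : ℝ :=
  Real.sin (φ / 2) ^ (γ + 1 / 2) * Real.cos (φ / 2) ^ (η + 1 / 2)

/-- Liouville-transformed Jacobi polynomial -/
noncomputable def ju (γ η : ℝ) (n : ℕ) (φ : ℝ) : ℝ := jw γ η φ * jacobiP γ η n (Real.cos φ)

/-- logarithmic derivative of the weight -/
noncomputable def ja (γ η φ : ℝ) : ℝ :=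
  (γ + 1 / 2) / 2 * (Real.cos (φ / 2) / Real.sin (φ / 2)) -
    (η + 1 / 2) / 2 * (Real.sin (φ / 2) / Real.cos (φ / 2))

/-- the potential -/
noncomputable def jq (γ η φ : ℝ) : ℝ :=
  (1 / 4 - γ ^ 2) / (4 * Real.sin (φ / 2) ^ 2) + (1 / 4 - η ^ 2) / (4 * Real.cos (φ / 2) ^ 2)

lemma sc_half_pos {φ : ℝ} (h0 : 0 < φ) (h1 : φ < π) : 0 < Real.sin (φ / 2) ∧ 0 < Real.cos (φ / 2) :=
  ⟨Real.sin_pos_of_pos_of_lt_pi (by linarith) (by linarith),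
    Real.cos_pos_of_mem_Ioo ⟨by linarith, by linarith⟩⟩

lemma hd_sinh (φ : ℝ) : HasDerivAt (fun φ : ℝ => Real.sin (φ / 2)) (Real.cos (φ / 2) / 2) φ := by
  have := (Real.hasDerivAt_sin (φ / 2)).comp φ ((hasDerivAt_id φ).div_const 2)
  exact this.congr_deriv (by ring)

lemma hd_cosh (φ : ℝ) : HasDerivAt (fun φ : ℝ => Real.cos (φ / 2)) (-Real.sin (φ / 2) / 2) φ := by
  have := (Real.hasDerivAt_cos (φ / 2)).comp φ ((hasDerivAt_id φ).div_const 2)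
  exact this.congr_deriv (by ring)

lemma hd_jw (γ η : ℝ) {φ : ℝ} (h0 : 0 < φ) (h1 : φ < π) :
    HasDerivAt (jw γ η) (ja γ η φ * jw γ η φ) φ := by
  obtain ⟨hS, hC⟩ := sc_half_pos h0 h1
  have d1 := (hd_sinh φ).rpow_const (p := γ + 1 / 2) (Or.inl hS.ne')
  have d2 := (hd_cosh φ).rpow_const (p := η + 1 / 2) (Or.inl hC.ne')
  refine (d1.mul d2).congr_deriv ?_
  rw [Real.rpow_sub_one hS.ne', Real.rpow_sub_one hC.ne']
  simp only [ja, jw]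
  field_simp
  ring

lemma jw_succ (γ η : ℝ) {φ : ℝ} (h0 : 0 < φ) (h1 : φ < π) :
    jw (γ + 1) (η + 1) φ = jw γ η φ * (Real.sin (φ / 2) * Real.cos (φ / 2)) := by
  obtain ⟨hS, hC⟩ := sc_half_pos h0 h1
  simp only [jw]
  rw [show γ + 1 + 1 / 2 = γ + 1 / 2 + 1 by ring, show η + 1 + 1 / 2 = η + 1 / 2 + 1 by ring,
    Real.rpow_add_one hS.ne', Real.rpow_add_one hC.ne']
  ring

lemma cos_half1 (φ : ℝ) : (Real.cos φ - 1) / 2 = -Real.sin (φ / 2) ^ 2 := by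
  have := Real.cos_sq (φ / 2)
  have h2 := Real.sin_sq_add_cos_sq (φ / 2)
  rw [show 2 * (φ / 2) = φ by ring] at this
  linarith

lemma cos_half2 (φ : ℝ) : (Real.cos φ + 1) / 2 = Real.cos (φ / 2) ^ 2 := by
  have := Real.cos_sq (φ / 2)
  rw [show 2 * (φ / 2) = φ by ring] at this
  linarith

lemma sin_half (φ : ℝ) : Real.sin φ = 2 * Real.sin (φ / 2) * Real.cos (φ / 2) := by
  rw [← Real.sin_two_mul]; congr 1; ring

lemma hd_ju (γ η : ℝ) (hγ : -1 < γ) (hη : -1 < η) (m : ℕ) {φ : ℝ} (h0 : 0 < φ) (h1 : φ < π) :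
    HasDerivAt (ju γ η (m + 1))
      (ja γ η φ * ju γ η (m + 1) φ - ((m : ℝ) + 1 + γ + η + 1) * ju (γ + 1) (η + 1) m φ) φ := by
  have d1 := hd_jw γ η h0 h1
  have d2 := (jacobi_deriv γ η hγ hη m (Real.cos φ)).comp φ (Real.hasDerivAt_cos φ)
  refine (d1.mul d2).congr_deriv ?_
  simp only [ju, Function.comp_def]
  rw [jw_succ γ η h0 h1, sin_half]
  ring

lemma hd_jv (γ η : ℝ) (hγ : -1 < γ) (hη : -1 < η) (m : ℕ) {φ : ℝ} (h0 : 0 < φ) (h1 : φ < π) :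
    HasDerivAt (ju (γ + 1) (η + 1) m)
      (-ja γ η φ * ju (γ + 1) (η + 1) m φ + ((m : ℝ) + 1) * ju γ η (m + 1) φ) φ := by
  obtain ⟨hS, hC⟩ := sc_half_pos h0 h1
  obtain ⟨d, e⟩ := jacobi_adj γ η hγ hη m (Real.cos φ)
  have d1 := hd_jw (γ + 1) (η + 1) h0 h1
  have d2 := d.comp φ (Real.hasDerivAt_cos φ)
  refine (d1.mul d2).congr_deriv ?_
  simp only [ju, Function.comp_def, ja]
  rw [cos_half1, cos_half2] at e
  rw [jw_succ γ η h0 h1]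
  rw [show ((m : ℝ) + 1) * (jw γ η φ * jacobiP γ η (m + 1) (Real.cos φ)) =
    jw γ η φ * (((m : ℝ) + 1) * jacobiP γ η (m + 1) (Real.cos φ)) by ring, ← e, sin_half φ]
  field_simp
  ring

lemma hd_ja (γ η : ℝ) {φ : ℝ} (h0 : 0 < φ) (h1 : φ < π) :
    HasDerivAt (ja γ η) (-((γ + 1 / 2) / (4 * Real.sin (φ / 2) ^ 2)) -
      (η + 1 / 2) / (4 * Real.cos (φ / 2) ^ 2)) φ := by
  obtain ⟨hS, hC⟩ := sc_half_pos h0 h1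
  have d1 := ((hd_cosh φ).div (hd_sinh φ) hS.ne').const_mul ((γ + 1 / 2) / 2)
  have d2 := ((hd_sinh φ).div (hd_cosh φ) hC.ne').const_mul ((η + 1 / 2) / 2)
  refine (d1.sub d2).congr_deriv ?_
  have h2 := Real.sin_sq_add_cos_sq (φ / 2)
  field_simp
  linear_combination 4 * (-(2 * γ + 1) * Real.cos (φ / 2) ^ 2 - (2 * η + 1) * Real.sin (φ / 2) ^ 2) * h2

/-- first derivative of `ju` -/
noncomputable def jdu (γ η : ℝ) (m : ℕ) (φ : ℝ) : ℝ :=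
  ja γ η φ * ju γ η (m + 1) φ - ((m : ℝ) + 1 + γ + η + 1) * ju (γ + 1) (η + 1) m φ

lemma hd_jdu (γ η : ℝ) (hγ : -1 < γ) (hη : -1 < η) (m : ℕ) {φ : ℝ} (h0 : 0 < φ) (h1 : φ < π) :
    HasDerivAt (jdu γ η m)
      (-((((m : ℝ) + 1) + (γ + η + 1) / 2) ^ 2 + jq γ η φ) * ju γ η (m + 1) φ) φ := by
  obtain ⟨hS, hC⟩ := sc_half_pos h0 h1
  have d1 := (hd_ja γ η h0 h1).mul (hd_ju γ η hγ hη m h0 h1)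
  have d2 := (hd_jv γ η hγ hη m h0 h1).const_mul ((m : ℝ) + 1 + γ + η + 1)
  refine (d1.sub d2).congr_deriv ?_
  have h2 := Real.sin_sq_add_cos_sq (φ / 2)
  simp only [ja, jq]
  set U := ju γ η (m + 1) φ
  set V := ju (γ + 1) (η + 1) m φ
  have key : -((γ + 1 / 2) / (4 * Real.sin (φ / 2) ^ 2)) - (η + 1 / 2) / (4 * Real.cos (φ / 2) ^ 2)
      + ((γ + 1 / 2) / 2 * (Real.cos (φ / 2) / Real.sin (φ / 2)) -
    (η + 1 / 2) / 2 * (Real.sin (φ / 2) / Real.cos (φ / 2))) ^ 2 =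
      -((γ + η + 1) / 2) ^ 2 - ((1 / 4 - γ ^ 2) / (4 * Real.sin (φ / 2) ^ 2)
        + (1 / 4 - η ^ 2) / (4 * Real.cos (φ / 2) ^ 2)) := by
    set s := Real.sin (φ / 2)
    set c := Real.cos (φ / 2)
    have hc : c ^ 2 = 1 - s ^ 2 := by linarith
    have e1 : c ^ 2 / s ^ 2 = 1 / s ^ 2 - 1 := by rw [hc]; field_simp
    have e2 : s ^ 2 / c ^ 2 = 1 / c ^ 2 - 1 := by
      have : s ^ 2 = 1 - c ^ 2 := by linarith
      rw [this]; field_simp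
    have e3 : (c / s) * (s / c) = 1 := by field_simp
    have e4 : ((γ + 1 / 2) / 2 * (c / s) - (η + 1 / 2) / 2 * (s / c)) ^ 2 =
      ((γ + 1 / 2) / 2) ^ 2 * (c ^ 2 / s ^ 2) + ((η + 1 / 2) / 2) ^ 2 * (s ^ 2 / c ^ 2)
        - 2 * ((γ + 1 / 2) / 2) * ((η + 1 / 2) / 2) * ((c / s) * (s / c)) := by ring
    rw [e4, e1, e2, e3]
    ring
  linear_combination U * key

lemma mono_bound {f f' : ℝ → ℝ} {A x y : ℝ} (hx : 0 < x) (hxy : x ≤ y)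
    (hf : ∀ t ∈ Set.Icc x y, HasDerivAt f (f' t) t) (hb : ∀ t ∈ Set.Icc x y, |f' t| ≤ A / t ^ 3) :
    |f y - f x| ≤ A * (x ^ 2)⁻¹ := by
  have hA : 0 ≤ A := by
    have := (abs_nonneg _).trans (hb x ⟨le_rfl, hxy⟩)
    by_contra h
    have : A / x ^ 3 < 0 := div_neg_of_neg_of_pos (by linarith) (by positivity)
    linarith
  have hinv : ∀ t ∈ Set.Icc x y, HasDerivAt (fun t : ℝ => (t ^ 2)⁻¹) (-2 / t ^ 3) t := by
    intro t ht
    have ht0 : t ≠ 0 := by have := ht.1; linarith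
    refine ((hasDerivAt_pow 2 t).inv (by positivity)).congr_deriv ?_
    field_simp
    push_cast
    ring
  have key : ∀ σ : ℝ, |σ| = 1 → σ * (f y - f x) ≤ A * (x ^ 2)⁻¹ := by
    intro σ hσ
    have hd : ∀ t ∈ Set.Icc x y, HasDerivAt (fun t => σ * f t + A / 2 * (t ^ 2)⁻¹)
        (σ * f' t + A / 2 * (-2 / t ^ 3)) t := fun t ht =>
      ((hf t ht).const_mul σ).add ((hinv t ht).const_mul (A / 2))
    have hanti : AntitoneOn (fun t => σ * f t + A / 2 * (t ^ 2)⁻¹) (Set.Icc x y) := by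
      apply antitoneOn_of_deriv_nonpos (convex_Icc x y)
      · exact fun t ht => (hd t ht).continuousAt.continuousWithinAt
      · exact fun t ht => (hd t (interior_subset ht)).differentiableAt.differentiableWithinAt
      · intro t ht
        have ht' := interior_subset ht
        rw [(hd t ht').deriv]
        have h1 := hb t ht'
        have h2 : σ * f' t ≤ |f' t| := by
          calc σ * f' t ≤ |σ * f' t| := le_abs_self _
            _ = |f' t| := by rw [abs_mul, hσ, one_mul]
        have h3 : A / 2 * (-2 / t ^ 3) = -(A / t ^ 3) := by ring
        linarith
    have := hanti ⟨le_rfl, hxy⟩ ⟨hxy, le_rfl⟩ hxy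
    simp only at this
    have hy : 0 < y := by linarith
    have p1 : 0 ≤ A / 2 * (y ^ 2)⁻¹ := by positivity
    have p2 : 0 ≤ A / 2 * (x ^ 2)⁻¹ := by positivity
    nlinarith
  rw [abs_le]
  constructor
  · have := key (-1) (by simp); linarith
  · have := key 1 (by simp); linarith

lemma mono_bound' {f f' : ℝ → ℝ} {A b x y : ℝ} (hx : 0 < x) (hxb : x ≤ b) (hy : 0 < y) (hyb : y ≤ b)
    (hf : ∀ t, 0 < t → t ≤ b → HasDerivAt f (f' t) t)
    (hb : ∀ t, min x y ≤ t → t ≤ b → |f' t| ≤ A / t ^ 3) :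
    |f y - f x| ≤ |A| * ((x ^ 2)⁻¹ + (y ^ 2)⁻¹) := by
  rcases le_total x y with h | h
  · have := mono_bound hx h (fun t ht => hf t (by linarith [ht.1]) (by linarith [ht.2]))
      (fun t ht => hb t (by rw [min_eq_left h]; exact ht.1) (by linarith [ht.2]))
    refine this.trans ?_
    have : A * (x ^ 2)⁻¹ ≤ |A| * (x ^ 2)⁻¹ := by gcongr; exact le_abs_self A
    have : 0 ≤ |A| * (y ^ 2)⁻¹ := by positivity
    linarith
  · have := mono_bound hy h (fun t ht => hf t (by linarith [ht.1]) (by linarith [ht.2]))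
      (fun t ht => hb t (by rw [min_eq_right h]; exact ht.1) (by linarith [ht.2]))
    rw [abs_sub_comm]
    refine this.trans ?_
    have : A * (y ^ 2)⁻¹ ≤ |A| * (y ^ 2)⁻¹ := by gcongr; exact le_abs_self A
    have : 0 ≤ |A| * (x ^ 2)⁻¹ := by positivity
    linarith

lemma energy_bound {N B b : ℝ} (hN : 0 < N) {u du q : ℝ → ℝ}
    (hu : ∀ t, 0 < t → t ≤ b → HasDerivAt u (du t) t)
    (hdu : ∀ t, 0 < t → t ≤ b → HasDerivAt du (-(N ^ 2 + q t) * u t) t)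
    (hq : ∀ t, 0 < t → t ≤ b → |q t| ≤ B / t ^ 2)
    {x y : ℝ} (hx : 0 < x) (hxb : x ≤ b) (hy : 0 < y) (hyb : y ≤ b) (hNx : 1 ≤ N * x)
    (hNy : 1 ≤ N * y) :
    du y ^ 2 + N ^ 2 * u y ^ 2 ≤ (du x ^ 2 + N ^ 2 * u x ^ 2) * Real.exp B := by
  set E : ℝ → ℝ := fun t => du t ^ 2 + N ^ 2 * u t ^ 2 with hE
  have hE0 : ∀ t, 0 ≤ E t := fun t => by simp only [hE]; positivity
  have hB : 0 ≤ B := by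
    have := (abs_nonneg _).trans (hq x hx hxb)
    by_contra h
    have : B / x ^ 2 < 0 := div_neg_of_neg_of_pos (by linarith) (by positivity)
    linarith
  have dE : ∀ t, 0 < t → t ≤ b → HasDerivAt E (-2 * q t * u t * du t) t := by
    intro t h0 h1
    have := ((hdu t h0 h1).pow 2).add (((hu t h0 h1).pow 2).const_mul (N ^ 2))
    refine this.congr_deriv ?_
    push_cast; ring
  have bE : ∀ t, 0 < t → t ≤ b → |-2 * q t * u t * du t| ≤ B / (N * t ^ 2) * E t := by
    intro t h0 h1
    have h2 : |-2 * q t * u t * du t| = |q t| * (2 * |u t| * |du t|) := by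
      rw [abs_mul, abs_mul, abs_mul]; norm_num; ring
    have h3 : 2 * |u t| * |du t| ≤ E t / N := by
      rw [le_div_iff₀ hN]
      simp only [hE]
      nlinarith [sq_nonneg (N * |u t| - |du t|), sq_abs (u t), sq_abs (du t)]
    rw [h2]
    calc |q t| * (2 * |u t| * |du t|) ≤ B / t ^ 2 * (E t / N) := by
          gcongr
          exact hq t h0 h1
      _ = B / (N * t ^ 2) * E t := by field_simp
  have dP : ∀ σ t : ℝ, 0 < t → HasDerivAt (fun t : ℝ => Real.exp (σ * (B / N) * t⁻¹))
      (Real.exp (σ * (B / N) * t⁻¹) * (σ * (B / N) * (-(t ^ 2)⁻¹))) t := by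
    intro σ t ht
    exact ((hasDerivAt_inv ht.ne').const_mul (σ * (B / N))).exp
  have hxi : 0 ≤ B / N * x⁻¹ := by positivity
  have hyi : 0 ≤ B / N * y⁻¹ := by positivity
  have hx1 : B / N * x⁻¹ ≤ B := by
    rw [div_mul_eq_mul_div, div_le_iff₀ hN, ← div_eq_mul_inv, div_le_iff₀ hx]
    nlinarith
  have hy1 : B / N * y⁻¹ ≤ B := by
    rw [div_mul_eq_mul_div, div_le_iff₀ hN, ← div_eq_mul_inv, div_le_iff₀ hy]
    nlinarith
  rcases le_total x y with h | h
  · -- E exp(B/(Nt)) antitone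
    have hd : ∀ t ∈ Set.Icc x y, HasDerivAt (fun t => E t * Real.exp (1 * (B / N) * t⁻¹)) _ t :=
      fun t ht => (dE t (by linarith [ht.1]) (by linarith [ht.2])).mul (dP 1 t (by linarith [ht.1]))
    have hanti : AntitoneOn (fun t => E t * Real.exp (1 * (B / N) * t⁻¹)) (Set.Icc x y) := by
      apply antitoneOn_of_deriv_nonpos (convex_Icc x y)
      · exact fun t ht => (hd t ht).continuousAt.continuousWithinAt
      · exact fun t ht => (hd t (interior_subset ht)).differentiableAt.differentiableWithinAt
      · intro t ht
        have ht' := interior_subset ht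
        rw [(hd t ht').deriv]
        have h1 := (abs_le.1 (bE t (by linarith [ht'.1]) (by linarith [ht'.2]))).2
        have h3 : -2 * q t * u t * du t * rexp (1 * (B / N) * t⁻¹) +
            E t * (rexp (1 * (B / N) * t⁻¹) * (1 * (B / N) * -(t ^ 2)⁻¹)) =
            rexp (1 * (B / N) * t⁻¹) * (-2 * q t * u t * du t - B / (N * t ^ 2) * E t) := by
          have : t ≠ 0 := by linarith [ht'.1]
          field_simp
          ring
        rw [h3]
        exact mul_nonpos_of_nonneg_of_nonpos (Real.exp_pos _).le (by linarith)
    have := hanti ⟨le_rfl, h⟩ ⟨h, le_rfl⟩ h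
    simp only [one_mul] at this
    calc E y = E y * 1 := by ring
      _ ≤ E y * Real.exp (B / N * y⁻¹) := by gcongr; exact Real.one_le_exp hyi
      _ ≤ E x * Real.exp (B / N * x⁻¹) := this
      _ ≤ E x * Real.exp B := by gcongr
  · have hd : ∀ t ∈ Set.Icc y x, HasDerivAt (fun t => E t * Real.exp ((-1) * (B / N) * t⁻¹)) _ t :=
      fun t ht => (dE t (by linarith [ht.1]) (by linarith [ht.2])).mul (dP (-1) t (by linarith [ht.1]))
    have hanti : MonotoneOn (fun t => E t * Real.exp ((-1) * (B / N) * t⁻¹)) (Set.Icc y x) := by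
      apply monotoneOn_of_deriv_nonneg (convex_Icc y x)
      · exact fun t ht => (hd t ht).continuousAt.continuousWithinAt
      · exact fun t ht => (hd t (interior_subset ht)).differentiableAt.differentiableWithinAt
      · intro t ht
        have ht' := interior_subset ht
        rw [(hd t ht').deriv]
        have h1 := (abs_le.1 (bE t (by linarith [ht'.1]) (by linarith [ht'.2]))).1
        have h3 : -2 * q t * u t * du t * rexp ((-1) * (B / N) * t⁻¹) +
            E t * (rexp ((-1) * (B / N) * t⁻¹) * ((-1) * (B / N) * -(t ^ 2)⁻¹)) =
            rexp ((-1) * (B / N) * t⁻¹) * (-2 * q t * u t * du t + B / (N * t ^ 2) * E t) := by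
          have : t ≠ 0 := by linarith [ht'.1]
          field_simp
        rw [h3]
        exact mul_nonneg (Real.exp_pos _).le (by linarith)
    have := hanti ⟨le_rfl, h⟩ ⟨h, le_rfl⟩ h
    simp only at this
    have e1 : Real.exp (B / N * y⁻¹) * Real.exp (-1 * (B / N) * y⁻¹) = 1 := by
      rw [← Real.exp_add]; simp
    calc E y = (E y * Real.exp (-1 * (B / N) * y⁻¹)) * Real.exp (B / N * y⁻¹) := by
          rw [mul_assoc, mul_comm (Real.exp _), e1, mul_one]
      _ ≤ (E x * Real.exp (-1 * (B / N) * x⁻¹)) * Real.exp (B / N * y⁻¹) := by gcongr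
      _ ≤ (E x * 1) * Real.exp B := by
          gcongr
          · rw [Real.exp_le_one_iff]; linarith
      _ = E x * Real.exp B := by ring

/-- WKB function -/
noncomputable def wk (N : ℝ) (h : ℝ → ℝ) (δ t : ℝ) : ℝ :=
  Real.cos (N * t - δ) + h t / N * Real.sin (N * t - δ)

/-- derivative of the WKB function -/
noncomputable def wk' (N : ℝ) (h q : ℝ → ℝ) (δ t : ℝ) : ℝ :=
  -N * Real.sin (N * t - δ) + h t * Real.cos (N * t - δ) - q t / (2 * N) * Real.sin (N * t - δ)

lemma hd_wk {N : ℝ} (hN : 0 < N) {h q : ℝ → ℝ} {δ t : ℝ} (hh : HasDerivAt h (-q t / 2) t) :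
    HasDerivAt (wk N h δ) (wk' N h q δ t) t := by
  have l : HasDerivAt (fun t : ℝ => N * t - δ) N t := by
    simpa using ((hasDerivAt_id t).const_mul N).sub_const δ
  refine (l.cos.add ((hh.div_const N).mul l.sin)).congr_deriv ?_
  simp only [wk']
  field_simp
  ring

lemma hd_wk' {N : ℝ} (hN : 0 < N) {h q : ℝ → ℝ} {δ t r : ℝ} (hh : HasDerivAt h (-q t / 2) t)
    (hq : HasDerivAt q r t) :
    HasDerivAt (wk' N h q δ) (-(N ^ 2 + q t) * wk N h δ t +
      (q t * h t - r / 2) / N * Real.sin (N * t - δ)) t := by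
  have l : HasDerivAt (fun t : ℝ => N * t - δ) N t := by
    simpa using ((hasDerivAt_id t).const_mul N).sub_const δ
  refine (((l.sin.const_mul (-N)).add (hh.mul l.cos)).sub
    ((hq.div_const (2 * N)).mul l.sin)).congr_deriv ?_
  simp only [wk]
  field_simp
  ring

set_option maxHeartbeats 2000000 in
lemma wkb_main (B D b φ₀ : ℝ) (hB : 0 ≤ B) (hD : 0 ≤ D) (hφ₀ : 1 ≤ φ₀) (hφb : φ₀ ≤ b) :
    ∃ C : ℝ, 0 < C ∧ ∀ (N δ : ℝ) (u du h q r : ℝ → ℝ), 1 ≤ N →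
      (∀ t, 0 < t → t ≤ b → HasDerivAt u (du t) t) →
      (∀ t, 0 < t → t ≤ b → HasDerivAt du (-(N ^ 2 + q t) * u t) t) →
      (∀ t, 0 < t → t ≤ b → HasDerivAt h (-q t / 2) t) →
      (∀ t, 0 < t → t ≤ b → HasDerivAt q (r t) t) →
      (∀ t, 0 < t → t ≤ b → |h t| ≤ B / t) →
      (∀ t, 0 < t → t ≤ b → |q t| ≤ B / t ^ 2) →
      (∀ t, 0 < t → t ≤ b → |r t| ≤ B / t ^ 3) →
      |u φ₀ - wk N h δ φ₀| ≤ D / N ^ 2 → |du φ₀ - wk' N h q δ φ₀| ≤ D / N →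
      ∀ φ, 0 < φ → φ ≤ b → 1 ≤ N * φ → |u φ - wk N h δ φ| ≤ C / (N * φ) ^ 2 := by
  set Mu := 2 * (1 + 2 * B + D) * Real.exp B with hMu
  set B2 := B + B ^ 2 with hB2
  set B3 := (Mu + (1 + B)) * B2 + B2 * (1 + B) with hB3
  set B4 := D * (1 + 2 * B) + D * (1 + B) with hB4
  have hMu0 : 0 < Mu := by positivity
  have hb0 : 0 < b := by linarith
  refine ⟨2 * (1 + B) * (B4 * b ^ 2 + B3 * (1 + b ^ 2)) + (Mu + (1 + B)) * B2 + 1, by positivity, ?_⟩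
  intro N δ u du h q r hN1 hu hdu hh hq bh bq br m1 m2 φ h0 hφ hNφ
  have hN : 0 < N := by linarith
  have hφ₀0 : 0 < φ₀ := by linarith
  have hNφ₀ : 1 ≤ N * φ₀ := by nlinarith
  -- bounds for w
  have bw : ∀ δ t, 0 < t → t ≤ b → 1 ≤ N * t → |wk N h δ t| ≤ 1 + B := by
    intro δ t t0 tb hNt
    have e1 : |h t / N| ≤ B := by
      rw [abs_div, abs_of_pos hN, div_le_iff₀ hN]
      refine (bh t t0 tb).trans ?_
      rw [div_le_iff₀ t0]; nlinarith
    calc |wk N h δ t| ≤ |Real.cos (N * t - δ)| + |h t / N * Real.sin (N * t - δ)| := abs_add_le _ _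
      _ ≤ 1 + B * 1 := by
          rw [abs_mul]
          gcongr
          · exact Real.abs_cos_le_one _
          · exact Real.abs_sin_le_one _
      _ = 1 + B := by ring
  have bw' : ∀ δ t, 0 < t → t ≤ b → 1 ≤ N * t → |wk' N h q δ t| ≤ N * (1 + 2 * B) := by
    intro δ t t0 tb hNt
    have hinv : 1 / t ≤ N := by rw [div_le_iff₀ t0]; exact hNt
    have e1 : |h t| ≤ N * B := by
      refine (bh t t0 tb).trans ?_
      calc B / t = B * (1 / t) := by ring
        _ ≤ B * N := by gcongr
        _ = N * B := by ring
    have e2 : |q t / (2 * N)| ≤ N * B := by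
      rw [abs_div, abs_of_pos (show 0 < 2 * N by linarith), div_le_iff₀ (by linarith)]
      refine (bq t t0 tb).trans ?_
      calc B / t ^ 2 = B * (1 / t) ^ 2 := by ring
        _ ≤ B * N ^ 2 := by gcongr
        _ ≤ N * B * (2 * N) := by nlinarith [mul_nonneg hB (sq_nonneg N)]
    calc |wk' N h q δ t| ≤ |-N * Real.sin (N * t - δ) + h t * Real.cos (N * t - δ)|
          + |q t / (2 * N) * Real.sin (N * t - δ)| := abs_sub _ _
      _ ≤ |-N * Real.sin (N * t - δ)| + |h t * Real.cos (N * t - δ)|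
          + |q t / (2 * N) * Real.sin (N * t - δ)| := by gcongr; exact abs_add_le _ _
      _ ≤ N * 1 + N * B * 1 + N * B * 1 := by
          rw [abs_mul, abs_mul, abs_mul, abs_neg, abs_of_pos hN]
          gcongr
          · exact Real.abs_sin_le_one _
          · exact Real.abs_cos_le_one _
          · exact Real.abs_sin_le_one _
      _ = N * (1 + 2 * B) := by ring
  -- a priori bound
  have bu0 : |u φ₀| ≤ 1 + 2 * B + D := by
    have h1 := bw δ φ₀ hφ₀0 hφb hNφ₀
    have h2 : D / N ^ 2 ≤ D := div_le_self hD (by nlinarith)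
    have h3 : |u φ₀| ≤ |u φ₀ - wk N h δ φ₀| + |wk N h δ φ₀| := by
      have := abs_add_le (u φ₀ - wk N h δ φ₀) (wk N h δ φ₀)
      simpa using this
    linarith
  have bdu0 : |du φ₀| ≤ N * (1 + 2 * B + D) := by
    have h1 := bw' δ φ₀ hφ₀0 hφb hNφ₀
    have h2 : D / N ≤ N * D := by rw [div_le_iff₀ hN]; nlinarith [mul_nonneg hD (by nlinarith : 0 ≤ N * N - 1)]
    have h3 : |du φ₀| ≤ |du φ₀ - wk' N h q δ φ₀| + |wk' N h q δ φ₀| := by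
      have := abs_add_le (du φ₀ - wk' N h q δ φ₀) (wk' N h q δ φ₀)
      simpa using this
    linarith
  have bu : ∀ t, 0 < t → t ≤ b → 1 ≤ N * t → |u t| ≤ Mu := by
    intro t t0 tb hNt
    have h1 := energy_bound hN hu hdu bq hφ₀0 hφb t0 tb hNφ₀ hNt
    have h2 : du φ₀ ^ 2 ≤ (N * (1 + 2 * B + D)) ^ 2 := by
      rw [← sq_abs]; gcongr
    have h3 : u φ₀ ^ 2 ≤ (1 + 2 * B + D) ^ 2 := by rw [← sq_abs]; gcongr
    have h4 : N ^ 2 * u t ^ 2 ≤ N ^ 2 * Mu ^ 2 := by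
      calc N ^ 2 * u t ^ 2 ≤ du t ^ 2 + N ^ 2 * u t ^ 2 := by nlinarith [sq_nonneg (du t)]
        _ ≤ _ := h1
        _ ≤ ((N * (1 + 2 * B + D)) ^ 2 + N ^ 2 * (1 + 2 * B + D) ^ 2) * Real.exp B := by gcongr
        _ = 2 * (N ^ 2 * (1 + 2 * B + D) ^ 2 * Real.exp B) := by ring
        _ ≤ 4 * (N ^ 2 * (1 + 2 * B + D) ^ 2 * (Real.exp B * Real.exp B)) := by
            have : Real.exp B ≤ Real.exp B * Real.exp B := by
              nlinarith [Real.one_le_exp hB, Real.exp_pos B]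
            have h5 : N ^ 2 * (1 + 2 * B + D) ^ 2 * Real.exp B ≤
              N ^ 2 * (1 + 2 * B + D) ^ 2 * (Real.exp B * Real.exp B) := by gcongr
            have h6 : 0 ≤ N ^ 2 * (1 + 2 * B + D) ^ 2 * Real.exp B := by positivity
            linarith
        _ = N ^ 2 * Mu ^ 2 := by rw [hMu]; ring
    have h5 : u t ^ 2 ≤ Mu ^ 2 := le_of_mul_le_mul_left h4 (by positivity)
    exact abs_le_of_sq_le_sq h5 hMu0.le
  -- residual
  set res : ℝ → ℝ → ℝ := fun δ t => (q t * h t - r t / 2) / N * Real.sin (N * t - δ) with hres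
  have bres : ∀ δ t, 0 < t → t ≤ b → |res δ t| ≤ B2 / N / t ^ 3 := by
    intro δ t t0 tb
    have e1 : |q t * h t - r t / 2| ≤ B2 / t ^ 3 := by
      calc |q t * h t - r t / 2| ≤ |q t * h t| + |r t / 2| := abs_sub _ _
        _ ≤ B / t ^ 2 * (B / t) + B / t ^ 3 := by
            rw [abs_mul]
            have : |r t / 2| ≤ |r t| := by
              rw [abs_div]; norm_num
            have := br t t0 tb
            gcongr
            · exact bq t t0 tb
            · exact bh t t0 tb
            · linarith
        _ = B2 / t ^ 3 := by rw [hB2]; field_simp; ring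
    simp only [hres]
    rw [abs_mul, abs_div, abs_of_pos hN]
    calc |q t * h t - r t / 2| / N * |Real.sin (N * t - δ)| ≤ B2 / t ^ 3 / N * 1 := by
          gcongr
          exact Real.abs_sin_le_one _
      _ = B2 / N / t ^ 3 := by field_simp
  -- Wronskians
  set W : ℝ → ℝ → ℝ := fun δ' t => (u t - wk N h δ t) * wk' N h q δ' t -
    (du t - wk' N h q δ t) * wk N h δ' t with hW
  have dW : ∀ δ' t, 0 < t → t ≤ b → HasDerivAt (W δ')
      ((u t - wk N h δ t) * res δ' t + res δ t * wk N h δ' t) t := by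
    intro δ' t t0 tb
    have a1 := hd_wk hN (δ := δ) (hh t t0 tb)
    have a2 := hd_wk' hN (δ := δ) (hh t t0 tb) (hq t t0 tb)
    have a3 := hd_wk hN (δ := δ') (hh t t0 tb)
    have a4 := hd_wk' hN (δ := δ') (hh t t0 tb) (hq t t0 tb)
    refine ((((hu t t0 tb).sub a1).mul a4).sub (((hdu t t0 tb).sub a2).mul a3)).congr_deriv ?_
    simp only [hres, Pi.sub_apply]
    ring
  have bW0 : ∀ δ', |W δ' φ₀| ≤ B4 / N := by
    intro δ'
    calc |W δ' φ₀| ≤ |(u φ₀ - wk N h δ φ₀) * wk' N h q δ' φ₀| +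
          |(du φ₀ - wk' N h q δ φ₀) * wk N h δ' φ₀| := abs_sub _ _
      _ ≤ D / N ^ 2 * (N * (1 + 2 * B)) + D / N * (1 + B) := by
          rw [abs_mul, abs_mul]
          gcongr
          · exact bw' _ _ hφ₀0 hφb hNφ₀
          · exact bw _ _ hφ₀0 hφb hNφ₀
      _ = B4 / N := by rw [hB4]; field_simp
  have bW : ∀ δ', |W δ' φ| ≤ (B4 * b ^ 2 + B3 * (1 + b ^ 2)) / (N * φ ^ 2) := by
    intro δ'
    have key := mono_bound' (A := B3 / N) hφ₀0 hφb h0 hφ (dW δ') (by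
      intro t ht tb
      have t0 : 0 < t := lt_of_lt_of_le (lt_min hφ₀0 h0) ht
      have hNt : 1 ≤ N * t := by
        have : N * min φ₀ φ ≤ N * t := by gcongr
        rcases min_choice φ₀ φ with e | e <;> rw [e] at this <;> linarith
      have e1 : |u t - wk N h δ t| ≤ Mu + (1 + B) :=
        (abs_sub _ _).trans (add_le_add (bu t t0 tb hNt) (bw δ t t0 tb hNt))
      calc |(u t - wk N h δ t) * res δ' t + res δ t * wk N h δ' t|
          ≤ |(u t - wk N h δ t) * res δ' t| + |res δ t * wk N h δ' t| := abs_add_le _ _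
        _ ≤ (Mu + (1 + B)) * (B2 / N / t ^ 3) + B2 / N / t ^ 3 * (1 + B) := by
            rw [abs_mul (u t - wk N h δ t) (res δ' t), abs_mul (res δ t) (wk N h δ' t)]
            gcongr
            · exact bres δ' t t0 tb
            · exact bres δ t t0 tb
            · exact bw δ' t t0 tb hNt
        _ = B3 / N / t ^ 3 := by rw [hB3]; field_simp)
    have hB30 : 0 ≤ B3 / N := by positivity
    rw [abs_of_nonneg hB30] at key
    have e2 : (φ₀ ^ 2)⁻¹ ≤ b ^ 2 * (φ ^ 2)⁻¹ := by
      have : (φ₀ ^ 2)⁻¹ ≤ 1 := inv_le_one_of_one_le₀ (by nlinarith)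
      have h2 : 1 ≤ b ^ 2 * (φ ^ 2)⁻¹ := by
        rw [← div_eq_mul_inv, le_div_iff₀ (by positivity), one_mul]; gcongr
      linarith
    have e3 : B4 / N ≤ B4 * b ^ 2 / (N * φ ^ 2) := by
      rw [div_le_div_iff₀ hN (by positivity)]
      have : φ ^ 2 ≤ b ^ 2 := by gcongr
      have : B4 * N * φ ^ 2 ≤ B4 * N * b ^ 2 := by gcongr
      linarith
    have e4 : |W δ' φ| ≤ |W δ' φ - W δ' φ₀| + |W δ' φ₀| := by
      have := abs_add_le (W δ' φ - W δ' φ₀) (W δ' φ₀)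
      simpa using this
    have e5 : B3 / N * ((φ₀ ^ 2)⁻¹ + (φ ^ 2)⁻¹) ≤ B3 * (1 + b ^ 2) / (N * φ ^ 2) := by
      calc B3 / N * ((φ₀ ^ 2)⁻¹ + (φ ^ 2)⁻¹) ≤ B3 / N * (b ^ 2 * (φ ^ 2)⁻¹ + (φ ^ 2)⁻¹) := by gcongr
        _ = B3 * (1 + b ^ 2) / (N * φ ^ 2) := by field_simp; ring
    have e6 : (B4 * b ^ 2 + B3 * (1 + b ^ 2)) / (N * φ ^ 2) =
      B4 * b ^ 2 / (N * φ ^ 2) + B3 * (1 + b ^ 2) / (N * φ ^ 2) := by ring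
    have := bW0 δ'
    linarith
  -- conclusion
  have id1 : N * (u φ - wk N h δ φ) = wk N h δ φ * W (δ + π / 2) φ - wk N h (δ + π / 2) φ * W δ φ -
      (u φ - wk N h δ φ) * ((q φ / 2 + h φ ^ 2) / N) := by
    have s1 : Real.sin (N * φ - (δ + π / 2)) = -Real.cos (N * φ - δ) := by
      rw [show N * φ - (δ + π / 2) = N * φ - δ - π / 2 by ring, Real.sin_sub_pi_div_two]
    have s2 : Real.cos (N * φ - (δ + π / 2)) = Real.sin (N * φ - δ) := by
      rw [show N * φ - (δ + π / 2) = N * φ - δ - π / 2 by ring, Real.cos_sub_pi_div_two]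
    simp only [hW]
    have hΔ : wk N h δ φ * wk' N h q (δ + π / 2) φ - wk N h (δ + π / 2) φ * wk' N h q δ φ =
        N + (q φ / 2 + h φ ^ 2) / N := by
      simp only [wk, wk', s1, s2]
      have := Real.sin_sq_add_cos_sq (N * φ - δ)
      set s := Real.sin (N * φ - δ)
      set c := Real.cos (N * φ - δ)
      field_simp
      linear_combination N * (2 * N ^ 2 + q φ + 2 * h φ ^ 2) * this
    linear_combination (-(u φ - wk N h δ φ)) * hΔ
  have e1 : |u φ - wk N h δ φ| ≤ Mu + (1 + B) :=
    (abs_sub _ _).trans (add_le_add (bu φ h0 hφ hNφ) (bw δ φ h0 hφ hNφ))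
  have e2 : |(q φ / 2 + h φ ^ 2) / N| ≤ B2 / (N * φ ^ 2) := by
    rw [abs_div, abs_of_pos hN, div_le_div_iff₀ hN (by positivity)]
    have : |q φ / 2 + h φ ^ 2| ≤ B2 / φ ^ 2 := by
      calc |q φ / 2 + h φ ^ 2| ≤ |q φ / 2| + |h φ ^ 2| := abs_add_le _ _
        _ ≤ B / φ ^ 2 + (B / φ) ^ 2 := by
            have h1 : |q φ / 2| ≤ |q φ| := by rw [abs_div]; norm_num
            have := bq φ h0 hφ
            rw [abs_pow]
            gcongr
            · linarith
            · exact bh φ h0 hφ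
        _ = B2 / φ ^ 2 := by rw [hB2]; field_simp
    calc |q φ / 2 + h φ ^ 2| * (N * φ ^ 2) ≤ B2 / φ ^ 2 * (N * φ ^ 2) := by gcongr
      _ = B2 * N := by field_simp
  have fin : N * |u φ - wk N h δ φ| ≤
      (2 * (1 + B) * (B4 * b ^ 2 + B3 * (1 + b ^ 2)) + (Mu + (1 + B)) * B2) / (N * φ ^ 2) := by
    have eN : N * |u φ - wk N h δ φ| = |N * (u φ - wk N h δ φ)| := by
      rw [abs_mul, abs_of_pos hN]
    rw [eN, id1]
    calc _ ≤ |wk N h δ φ * W (δ + π / 2) φ - wk N h (δ + π / 2) φ * W δ φ| +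
          |(u φ - wk N h δ φ) * ((q φ / 2 + h φ ^ 2) / N)| := abs_sub _ _
      _ ≤ |wk N h δ φ * W (δ + π / 2) φ| + |wk N h (δ + π / 2) φ * W δ φ| +
          |(u φ - wk N h δ φ) * ((q φ / 2 + h φ ^ 2) / N)| := by gcongr; exact abs_sub _ _
      _ ≤ (1 + B) * ((B4 * b ^ 2 + B3 * (1 + b ^ 2)) / (N * φ ^ 2)) +
          (1 + B) * ((B4 * b ^ 2 + B3 * (1 + b ^ 2)) / (N * φ ^ 2)) +
          (Mu + (1 + B)) * (B2 / (N * φ ^ 2)) := by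
          rw [abs_mul, abs_mul, abs_mul]
          gcongr
          · exact bw _ _ h0 hφ hNφ
          · exact bW _
          · exact bw _ _ h0 hφ hNφ
          · exact bW _
      _ = _ := by ring
  rw [le_div_iff₀ (by positivity)]
  rw [le_div_iff₀ (by positivity)] at fin
  calc |u φ - wk N h δ φ| * (N * φ) ^ 2 = N * |u φ - wk N h δ φ| * (N * φ ^ 2) := by ring
    _ ≤ _ := fin
    _ ≤ _ := by linarith

noncomputable def jh (γ η φ : ℝ) : ℝ :=
  (1 / 4 - γ ^ 2) / 4 * (Real.cos (φ / 2) / Real.sin (φ / 2)) -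
    (1 / 4 - η ^ 2) / 4 * (Real.sin (φ / 2) / Real.cos (φ / 2))

noncomputable def jr (γ η φ : ℝ) : ℝ :=
  -((1 / 4 - γ ^ 2) / 4) * (Real.cos (φ / 2) / Real.sin (φ / 2) ^ 3) +
    (1 / 4 - η ^ 2) / 4 * (Real.sin (φ / 2) / Real.cos (φ / 2) ^ 3)

lemma hd_jh (γ η : ℝ) {φ : ℝ} (h0 : 0 < φ) (h1 : φ < π) :
    HasDerivAt (jh γ η) (-jq γ η φ / 2) φ := by
  obtain ⟨hs, hc⟩ := sc_half_pos h0 h1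
  refine (((((hd_cosh φ).div (hd_sinh φ) hs.ne').const_mul _)).sub
    (((hd_sinh φ).div (hd_cosh φ) hc.ne').const_mul _)).congr_deriv ?_
  have := Real.sin_sq_add_cos_sq (φ / 2)
  simp only [jq]
  set s := Real.sin (φ / 2)
  set c := Real.cos (φ / 2)
  have e1 : (-s / 2 * s - c * (c / 2)) / s ^ 2 = -(1 / 2) / s ^ 2 := by
    congr 1; linear_combination (-1/2) * this
  have e2 : (c / 2 * c - s * (-s / 2)) / c ^ 2 = (1 / 2) / c ^ 2 := by
    congr 1; linear_combination (1/2) * this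
  rw [e1, e2]; field_simp; ring

lemma hd_jq (γ η : ℝ) {φ : ℝ} (h0 : 0 < φ) (h1 : φ < π) :
    HasDerivAt (jq γ η) (jr γ η φ) φ := by
  obtain ⟨hs, hc⟩ := sc_half_pos h0 h1
  have a1 : HasDerivAt (fun φ : ℝ => 4 * Real.sin (φ / 2) ^ 2) _ φ :=
    ((hd_sinh φ).pow 2).const_mul 4
  have a2 : HasDerivAt (fun φ : ℝ => 4 * Real.cos (φ / 2) ^ 2) _ φ :=
    ((hd_cosh φ).pow 2).const_mul 4
  have b1 := (hasDerivAt_const φ (1 / 4 - γ ^ 2)).div a1 (by positivity)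
  have b2 := (hasDerivAt_const φ (1 / 4 - η ^ 2)).div a2 (by positivity)
  refine (b1.add b2).congr_deriv ?_
  simp only [jr]
  set s := Real.sin (φ / 2)
  set c := Real.cos (φ / 2)
  field_simp
  ring

lemma F2fn_eq_jh (γ η : ℝ) {φ : ℝ} (h0 : 0 < φ) (h1 : φ < π) : F2fn γ η φ = jh γ η φ := by
  obtain ⟨hs, hc⟩ := sc_half_pos h0 h1
  have hsin : Real.sin φ = 2 * Real.sin (φ / 2) * Real.cos (φ / 2) := by
    rw [← Real.sin_two_mul]; ring_nf
  have hcos : Real.cos φ = Real.cos (φ / 2) ^ 2 - Real.sin (φ / 2) ^ 2 := by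
    rw [← Real.cos_two_mul']; ring_nf
  simp only [F2fn, jh, Real.tan_eq_sin_div_cos, hsin, hcos]
  field_simp
  ring

lemma jhqr_bounds (γ η b : ℝ) (hb0 : 0 < b) (hb : b < π) : ∃ B : ℝ, 0 ≤ B ∧
    (∀ t, 0 < t → t ≤ b → |jh γ η t| ≤ B / t) ∧
    (∀ t, 0 < t → t ≤ b → |jq γ η t| ≤ B / t ^ 2) ∧
    (∀ t, 0 < t → t ≤ b → |jr γ η t| ≤ B / t ^ 3) := by
  set G := |1 / 4 - γ ^ 2| / 4 with hG
  set H := |1 / 4 - η ^ 2| / 4 with hH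
  have hG0 : 0 ≤ G := by positivity
  have hH0 : 0 ≤ H := by positivity
  obtain ⟨_, hk⟩ := sc_half_pos hb0 hb
  set k := Real.cos (b / 2) with hkdef
  have hk1 : k ≤ 1 := Real.cos_le_one _
  have hpi := Real.pi_gt_three
  have S : ∀ t, 0 < t → t ≤ b → 0 < Real.sin (t / 2) ∧ k ≤ Real.cos (t / 2) ∧
      (Real.sin (t / 2))⁻¹ ≤ π / t ∧ (Real.cos (t / 2))⁻¹ ≤ k⁻¹ := by
    intro t h0 h1
    obtain ⟨hs, hc⟩ := sc_half_pos h0 (lt_of_le_of_lt h1 hb)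
    have hkc : k ≤ Real.cos (t / 2) :=
      Real.cos_le_cos_of_nonneg_of_le_pi (by linarith) (by linarith) (by linarith)
    refine ⟨hs, hkc, ?_, by gcongr⟩
    have := Real.mul_le_sin (x := t / 2) (by linarith) (by linarith)
    rw [inv_le_comm₀ hs (by positivity), inv_div]
    calc t / π = 2 / π * (t / 2) := by ring
      _ ≤ _ := this
  refine ⟨(G + H) * (π ^ 3 + π ^ 3 * k⁻¹ ^ 3), by positivity, ?_, ?_, ?_⟩
  all_goals
    intro t h0 h1
    obtain ⟨hs, hc, is, ic⟩ := S t h0 h1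
    have hc0 : 0 < Real.cos (t / 2) := lt_of_lt_of_le hk hc
    have hkt : k⁻¹ ≤ π / t * k⁻¹ := by
      have : 1 ≤ π / t := by rw [le_div_iff₀ h0]; linarith
      have : 0 < k⁻¹ := by positivity
      nlinarith
    have hk1' : 1 ≤ k⁻¹ := (one_le_inv₀ hk).2 hk1
    have is0 : 0 < (Real.sin (t / 2))⁻¹ := by positivity
    have ic0 : 0 < (Real.cos (t / 2))⁻¹ := by positivity
    have ic2 := ic.trans hkt
    have hs1 := Real.sin_le_one (t / 2)
    have hc1 := Real.cos_le_one (t / 2)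
    set s := Real.sin (t / 2)
    set c := Real.cos (t / 2)
  · have e : jh γ η t = (1 / 4 - γ ^ 2) / 4 * (c * s⁻¹) - (1 / 4 - η ^ 2) / 4 * (s * c⁻¹) := by
      simp only [jh]; rfl
    rw [e]
    refine (abs_sub _ _).trans ?_
    rw [abs_mul _ (c * s⁻¹), abs_mul _ (s * c⁻¹), abs_div, abs_div, abs_of_pos (show (0:ℝ) < 4 by norm_num),
      abs_of_pos (by positivity : 0 < c * s⁻¹), abs_of_pos (by positivity : 0 < s * c⁻¹)]
    calc G * (c * s⁻¹) + H * (s * c⁻¹) ≤ G * (1 * (π / t)) + H * (1 * (π / t * k⁻¹)) := by gcongr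
      _ ≤ (G + H) * (π / t) + (G + H) * (π / t * k⁻¹) := by
          rw [one_mul, one_mul]
          gcongr <;> linarith
      _ = (G + H) * (π ^ 1 + π ^ 1 * k⁻¹ ^ 1) / t := by field_simp
      _ ≤ _ := by
          gcongr
          all_goals first | linarith | norm_num
  · have e : jq γ η t = (1 / 4 - γ ^ 2) / 4 * (s⁻¹ ^ 2) + (1 / 4 - η ^ 2) / 4 * (c⁻¹ ^ 2) := by
      simp only [jq]; change (1 / 4 - γ ^ 2) / (4 * s ^ 2) + (1 / 4 - η ^ 2) / (4 * c ^ 2) = _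
      field_simp
    rw [e]
    refine (abs_add_le _ _).trans ?_
    rw [abs_mul, abs_mul, abs_div, abs_div, abs_of_pos (show (0:ℝ) < 4 by norm_num),
      abs_of_pos (by positivity : 0 < s⁻¹ ^ 2), abs_of_pos (by positivity : 0 < c⁻¹ ^ 2)]
    calc G * s⁻¹ ^ 2 + H * c⁻¹ ^ 2 ≤ G * (π / t) ^ 2 + H * (π / t * k⁻¹) ^ 2 := by gcongr
      _ ≤ (G + H) * (π / t) ^ 2 + (G + H) * (π / t * k⁻¹) ^ 2 := by
          gcongr <;> linarith
      _ = (G + H) * (π ^ 2 + π ^ 2 * k⁻¹ ^ 2) / t ^ 2 := by field_simp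
      _ ≤ _ := by
          gcongr
          all_goals first | linarith | norm_num
  · have e : jr γ η t = -((1 / 4 - γ ^ 2) / 4) * (c * s⁻¹ ^ 3) + (1 / 4 - η ^ 2) / 4 * (s * c⁻¹ ^ 3) := by
      simp only [jr]
      change -((1 / 4 - γ ^ 2) / 4) * (c / s ^ 3) + (1 / 4 - η ^ 2) / 4 * (s / c ^ 3) = _
      field_simp
    rw [e]
    refine (abs_add_le _ _).trans ?_
    rw [abs_mul _ (c * s⁻¹ ^ 3), abs_mul _ (s * c⁻¹ ^ 3), abs_neg, abs_div, abs_div, abs_of_pos (show (0:ℝ) < 4 by norm_num),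
      abs_of_pos (by positivity : 0 < c * s⁻¹ ^ 3), abs_of_pos (by positivity : 0 < s * c⁻¹ ^ 3)]
    calc G * (c * s⁻¹ ^ 3) + H * (s * c⁻¹ ^ 3) ≤ G * (1 * (π / t) ^ 3) + H * (1 * (π / t * k⁻¹) ^ 3) := by
          gcongr
      _ ≤ (G + H) * (π / t) ^ 3 + (G + H) * (π / t * k⁻¹) ^ 3 := by
          rw [one_mul, one_mul]
          gcongr <;> linarith
      _ = (G + H) * (π ^ 3 + π ^ 3 * k⁻¹ ^ 3) / t ^ 3 := by field_simp
      _ ≤ _ := le_rfl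

section
open Filter Topology Asymptotics

/-- Wallis integral -/
noncomputable def Iw (n : ℕ) : ℝ := ∫ x in (0:ℝ)..π, Real.sin x ^ n

lemma Iw_pos (n : ℕ) : 0 < Iw n := integral_sin_pow_pos n

lemma Iw_succ2 (n : ℕ) : Iw (n + 2) = ((n : ℝ) + 1) / (n + 2) * Iw n := by
  unfold Iw; rw [integral_sin_pow]; simp

lemma Iw_mul (n : ℕ) : Iw n * Iw (n + 1) = 2 * π / ((n : ℝ) + 1) := by
  induction n with
  | zero => simp [Iw]; ring
  | succ k ih =>
    rw [Iw_succ2]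
    have : Iw (k + 1) * (((k : ℝ) + 1) / (k + 2) * Iw k) = ((k : ℝ) + 1) / (k + 2) * (Iw k * Iw (k + 1)) := by
      ring
    rw [this, ih]; push_cast; field_simp; ring

lemma Iw_le (n : ℕ) : Iw (n + 1) ≤ Iw n := integral_sin_pow_succ_le n

lemma Iw_tendsto : Tendsto (fun n : ℕ => Real.sqrt n * Iw n) atTop (𝓝 (Real.sqrt (2 * π))) := by
  have h1 : Tendsto (fun n : ℕ => (n : ℝ) * Iw n ^ 2) atTop (𝓝 (2 * π)) := by
    have hl : Tendsto (fun n : ℕ => (n : ℝ) / (n + 1) * (2 * π)) atTop (𝓝 (1 * (2 * π))) :=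
      (tendsto_natCast_div_add_atTop (1 : ℝ)).mul_const _
    rw [one_mul] at hl
    refine tendsto_of_tendsto_of_tendsto_of_le_of_le' hl tendsto_const_nhds ?_ ?_
    · refine Eventually.of_forall fun n => ?_
      have h := Iw_mul n
      have h2 : Iw n * Iw (n + 1) ≤ Iw n ^ 2 := by
        nlinarith [Iw_le n, Iw_pos n]
      calc (n : ℝ) / (n + 1) * (2 * π) = n * (2 * π / (n + 1)) := by ring
        _ ≤ n * Iw n ^ 2 := by rw [← h]; gcongr
    · filter_upwards [eventually_ge_atTop 1] with n hn
      obtain ⟨k, rfl⟩ := Nat.exists_eq_add_of_le' hn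
      have h := Iw_mul k
      have h2 : Iw (k + 1) ^ 2 ≤ Iw k * Iw (k + 1) := by
        nlinarith [Iw_le k, Iw_pos (k + 1)]
      rw [h] at h2
      calc ((k + 1 : ℕ) : ℝ) * Iw (k + 1) ^ 2 ≤ ((k + 1 : ℕ) : ℝ) * (2 * π / (k + 1)) := by gcongr
        _ = 2 * π := by push_cast; field_simp
  have := (Real.continuous_sqrt.tendsto (2 * π)).comp h1
  refine this.congr fun n => ?_
  simp only [Function.comp]
  rw [Real.sqrt_mul (by positivity), Real.sqrt_sq (Iw_pos n).le]

lemma gamma_prod (s : ℝ) (hs : 0 < s) (n : ℕ) :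
    Real.Gamma ((n : ℝ) + 1 + s) = Real.Gamma s * ∏ j ∈ Finset.range (n + 1), (s + j) := by
  induction n with
  | zero => simp [add_comm (1 : ℝ) s, Real.Gamma_add_one hs.ne', mul_comm]
  | succ k ih =>
    rw [Finset.prod_range_succ, ← mul_assoc, ← ih,
      show ((k + 1 : ℕ) : ℝ) + 1 + s = ((k : ℝ) + 1 + s) + 1 by push_cast; ring,
      Real.Gamma_add_one (by positivity)]
    push_cast; ring

lemma gamma_tend (s : ℝ) (hs : 0 < s) :
    Tendsto (fun n : ℕ => Real.Gamma ((n : ℝ) + 1 + s) / ((n : ℝ) ^ s * (Nat.factorial n : ℝ))) atTop (𝓝 1) := by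
  have h := Real.GammaSeq_tendsto_Gamma s
  have hG := Real.Gamma_pos_of_pos hs
  have h2 := (tendsto_const_nhds (x := Real.Gamma s)).div h hG.ne'
  rw [div_self hG.ne'] at h2
  refine h2.congr fun n => ?_
  simp only [Real.GammaSeq, Pi.div_apply]
  rw [gamma_prod s hs]
  rw [div_div_eq_mul_div]

lemma gamma_ratio_tend (a b : ℝ) (ha : -1 < a) (hb : -1 < b) :
    Tendsto (fun n : ℕ => Real.Gamma ((n : ℝ) + a + 1) / Real.Gamma ((n : ℝ) + b + 1) * (n : ℝ) ^ (b - a))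
      atTop (𝓝 1) := by
  have h1 := gamma_tend (a + 1) (by linarith)
  have h2 := gamma_tend (b + 1) (by linarith)
  have h3 := h1.div h2 one_ne_zero
  have hlin : ∀ c : ℝ, Tendsto (fun n : ℕ => ((n : ℝ) + c + 1) / n) atTop (𝓝 1) := by
    intro c
    have := ((tendsto_natCast_div_add_atTop (c + 1 : ℝ))).inv₀ one_ne_zero
    rw [inv_one] at this
    refine this.congr fun n => ?_
    rw [inv_div, add_assoc]
  have h4 := h3.mul ((hlin b).div (hlin a) one_ne_zero)
  simp only [div_one, mul_one] at h4
  refine h4.congr' ?_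
  filter_upwards [eventually_gt_atTop 0] with n hn
  have hn' : (0 : ℝ) < n := by exact_mod_cast hn
  have hn1 : (1 : ℝ) ≤ n := by exact_mod_cast hn
  simp only [Pi.div_apply]
  rw [show (n : ℝ) + 1 + (a + 1) = (n + a + 1) + 1 by ring, Real.Gamma_add_one (s := (n : ℝ) + a + 1) (by linarith),
    show (n : ℝ) + 1 + (b + 1) = (n + b + 1) + 1 by ring, Real.Gamma_add_one (s := (n : ℝ) + b + 1) (by linarith)]
  have g1 := Real.Gamma_pos_of_pos (show 0 < (n : ℝ) + a + 1 by linarith)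
  have g2 := Real.Gamma_pos_of_pos (show 0 < (n : ℝ) + b + 1 by linarith)
  have e : (n : ℝ) ^ (b - a) = (n : ℝ) ^ (b + 1) / (n : ℝ) ^ (a + 1) := by
    rw [← Real.rpow_sub hn']; congr 1; ring
  rw [e]
  have e1 : 0 < (n : ℝ) ^ (a + 1) := by positivity
  have e2 : 0 < (n : ℝ) ^ (b + 1) := by positivity
  have e3 : (0 : ℝ) < Nat.factorial n := by positivity
  have e4 : (n : ℝ) + a + 1 ≠ 0 := by linarith
  have e5 : (n : ℝ) + b + 1 ≠ 0 := by linarith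
  field_simp

/-- telescoping -/
lemma telescope2 (a : ℕ → ℝ) (h0 : Tendsto a atTop (𝓝 0))
    (hd : (fun n => a (n + 2) - a n) =O[atTop] fun n : ℕ => ((n : ℝ) ^ 3)⁻¹) :
    a =O[atTop] fun n : ℕ => ((n : ℝ) ^ 2)⁻¹ := by
  obtain ⟨C, hC0, hC⟩ := hd.exists_pos
  rw [isBigOWith_iff] at hC
  obtain ⟨n0, hn0⟩ := eventually_atTop.1 hC
  have step : ∀ n : ℕ, max n0 3 ≤ n → |a n| ≤ C * ((n : ℝ) - 1)⁻¹ ^ 2 := by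
    intro n hn
    have hn1 : n0 ≤ n := le_trans (le_max_left _ _) hn
    have hn2 : (3 : ℝ) ≤ n := by exact_mod_cast le_trans (le_max_right _ _) hn
    have ind : ∀ k : ℕ, |a n| ≤ |a (n + 2 * k)| + C * (((n : ℝ) - 1)⁻¹ ^ 2 - ((n : ℝ) + 2 * k - 1)⁻¹ ^ 2) := by
      intro k
      induction k with
      | zero => simp
      | succ k ih =>
        have h := hn0 (n + 2 * k) (by omega)
        rw [Real.norm_eq_abs, Real.norm_eq_abs] at h
        set x : ℝ := (n : ℝ) + 2 * k with hx
        have hx3 : 3 ≤ x := by simp only [hx]; have : (0:ℝ) ≤ k := by positivity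
                               linarith
        have e : ((n + 2 * k : ℕ) : ℝ) = x := by push_cast; rfl
        rw [e, abs_of_pos (by positivity : 0 < (x ^ 3)⁻¹)] at h
        have t : |a (n + 2 * k)| ≤ |a (n + 2 * (k + 1))| + |a (n + 2 * k + 2) - a (n + 2 * k)| := by
          rw [show n + 2 * (k + 1) = n + 2 * k + 2 by ring]
          have := abs_sub (a (n + 2 * k + 2)) (a (n + 2 * k + 2) - a (n + 2 * k))
          simpa using this
        have key : (x ^ 3)⁻¹ ≤ (x - 1)⁻¹ ^ 2 - (x + 2 - 1)⁻¹ ^ 2 := by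
          have h1 : 0 < x - 1 := by linarith
          have : (x - 1)⁻¹ ^ 2 - (x + 2 - 1)⁻¹ ^ 2 = 4 * x / ((x - 1) ^ 2 * (x + 1) ^ 2) := by
            rw [show x + 2 - 1 = x + 1 by ring]
            field_simp; ring
          rw [this, ← one_div, div_le_div_iff₀ (by positivity) (by positivity)]
          nlinarith [sq_nonneg (x ^ 2), sq_nonneg x]
        have e2 : (n : ℝ) + 2 * ((k + 1 : ℕ) : ℝ) - 1 = x + 2 - 1 := by push_cast; simp only [hx]; ring
        rw [e2]
        nlinarith
    have lim : Tendsto (fun k : ℕ => |a (n + 2 * k)| + C * ((n : ℝ) - 1)⁻¹ ^ 2) atTop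
        (𝓝 (|0| + C * ((n : ℝ) - 1)⁻¹ ^ 2)) := by
      refine Tendsto.add_const _ (Tendsto.abs (h0.comp ?_))
      exact tendsto_atTop_mono (fun k => by simp only [id]; omega) tendsto_id
    have := ge_of_tendsto' lim (b := |a n|) (fun k => by
      refine (ind k).trans ?_
      have : 0 ≤ C * ((n : ℝ) + 2 * k - 1)⁻¹ ^ 2 := by positivity
      linarith)
    simpa using this
  refine IsBigO.of_bound (4 * C) ?_
  filter_upwards [eventually_ge_atTop (max n0 3)] with n hn
  have hn2 : (3 : ℝ) ≤ n := by exact_mod_cast le_trans (le_max_right _ _) hn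
  rw [Real.norm_eq_abs, Real.norm_eq_abs, abs_of_pos (by positivity : 0 < ((n:ℝ) ^ 2)⁻¹)]
  refine (step n hn).trans ?_
  have : ((n : ℝ) - 1)⁻¹ ≤ 2 * (n : ℝ)⁻¹ := by
    rw [inv_le_iff_one_le_mul₀ (by linarith), ← div_eq_mul_inv, div_mul_eq_mul_div, le_div_iff₀ (by linarith)]
    linarith
  have p : 0 ≤ ((n : ℝ) - 1)⁻¹ := inv_nonneg.2 (by linarith)
  calc C * ((n : ℝ) - 1)⁻¹ ^ 2 ≤ C * (2 * (n : ℝ)⁻¹) ^ 2 := by gcongr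
    _ = 4 * C * ((n : ℝ) ^ 2)⁻¹ := by ring
end

section
open Filter Topology Asymptotics

noncomputable def lE (s : ℝ) (n : ℕ) : ℝ :=
  Real.log ((n : ℝ) + s) - Real.log n - (s * (n : ℝ)⁻¹ - s ^ 2 / 2 * (n : ℝ)⁻¹ ^ 2)

noncomputable def iE (s : ℝ) (n : ℕ) : ℝ :=
  ((n : ℝ) + s)⁻¹ - ((n : ℝ)⁻¹ - s * (n : ℝ)⁻¹ ^ 2)

lemma ev_large (s : ℝ) : ∀ᶠ n : ℕ in atTop, 1 ≤ (n : ℝ) ∧ 2 * |s| < n := by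
  filter_upwards [eventually_ge_atTop 1, eventually_gt_atTop ⌈2 * |s|⌉₊] with n h1 h2
  exact ⟨by exact_mod_cast h1, lt_of_le_of_lt (Nat.le_ceil _) (by exact_mod_cast h2)⟩

lemma lE_O (s : ℝ) : lE s =O[atTop] fun n : ℕ => ((n : ℝ) ^ 3)⁻¹ := by
  refine IsBigO.of_bound (2 * |s| ^ 3) ?_
  filter_upwards [ev_large s] with n ⟨h1, h2⟩
  have hn : (0 : ℝ) < n := by linarith
  have habs := abs_nonneg s
  have hx : |-(s / n)| ≤ 1 / 2 := by
    rw [abs_neg, abs_div, abs_of_pos hn, div_le_iff₀ hn]; linarith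
  have hx1 : |-(s / n)| < 1 := by linarith
  have := Real.abs_log_sub_add_sum_range_le hx1 2
  have e : lE s n = (∑ i ∈ Finset.range 2, (-(s / n)) ^ (i + 1) / ((i : ℝ) + 1)) + Real.log (1 - -(s / n)) := by
    simp only [lE, Finset.sum_range_succ, Finset.sum_range_zero]
    have hpos : 0 < 1 - -(s / (n : ℝ)) := by linarith [(abs_lt.1 hx1).2]
    have : (n : ℝ) + s = n * (1 - -(s / n)) := by field_simp; ring
    rw [this, Real.log_mul hn.ne' hpos.ne']
    push_cast; ring
  rw [Real.norm_eq_abs, Real.norm_eq_abs, e, abs_of_pos (by positivity : 0 < ((n:ℝ) ^ 3)⁻¹)]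
  refine this.trans ?_
  rw [div_le_iff₀ (by linarith)]
  have e2 : |-(s / (n:ℝ))| ^ (2 + 1) = |s| ^ 3 * ((n : ℝ) ^ 3)⁻¹ := by
    rw [abs_neg, abs_div, abs_of_pos hn, div_pow]; rfl
  rw [e2]
  have : 0 ≤ |s| ^ 3 * ((n : ℝ) ^ 3)⁻¹ := by positivity
  nlinarith

lemma iE_O (s : ℝ) : iE s =O[atTop] fun n : ℕ => ((n : ℝ) ^ 3)⁻¹ := by
  refine IsBigO.of_bound (2 * s ^ 2) ?_
  filter_upwards [ev_large s] with n ⟨h1, h2⟩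
  have hn : (0 : ℝ) < n := by linarith
  have hs := abs_le.1 (show |s| ≤ n / 2 by linarith)
  have hns : 0 < (n : ℝ) + s := by linarith [hs.1]
  have e : iE s n = s ^ 2 * (((n : ℝ) ^ 2)⁻¹ * ((n : ℝ) + s)⁻¹) := by
    simp only [iE]; field_simp; ring
  rw [Real.norm_eq_abs, Real.norm_eq_abs, e, abs_of_nonneg (by positivity), abs_of_pos (by positivity : 0 < ((n:ℝ) ^ 3)⁻¹)]
  have : ((n : ℝ) + s)⁻¹ ≤ 2 * (n : ℝ)⁻¹ := by
    rw [inv_le_iff_one_le_mul₀ hns, ← div_eq_mul_inv, div_mul_eq_mul_div, le_div_iff₀ hn]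
    linarith [hs.1]
  calc s ^ 2 * (((n : ℝ) ^ 2)⁻¹ * ((n : ℝ) + s)⁻¹) ≤ s ^ 2 * (((n : ℝ) ^ 2)⁻¹ * (2 * (n : ℝ)⁻¹)) := by gcongr
    _ = 2 * s ^ 2 * ((n : ℝ) ^ 3)⁻¹ := by field_simp

noncomputable def Rn (γ η : ℝ) (n : ℕ) : ℝ := Real.Gamma ((n : ℝ) + γ + η + 1) / Real.Gamma ((n : ℝ) + γ + 1)
noncomputable def Nn (γ η : ℝ) (n : ℕ) : ℝ := (n : ℝ) + (γ + η + 1) / 2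

lemma Rn_succ2 (γ η : ℝ) (hγ : -(1 / 2) < γ) (hη : 0 < η) (n : ℕ) :
    Rn γ η (n + 2) = ((n : ℝ) + (γ + η + 1)) * ((n : ℝ) + (γ + η + 2)) /
      (((n : ℝ) + (γ + 1)) * ((n : ℝ) + (γ + 2))) * Rn γ η n := by
  have hn : (0 : ℝ) ≤ n := by positivity
  have h1 : 0 < (n : ℝ) + γ + η + 1 := by linarith
  have h2 : 0 < (n : ℝ) + γ + 1 := by linarith
  simp only [Rn]
  rw [Gs (y := ((n + 2 : ℕ) : ℝ) + γ + η + 1) (x := (n : ℝ) + γ + η + 1 + 1) (by linarith) (by push_cast; ring),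
    Gs (y := (n : ℝ) + γ + η + 1 + 1) h1 rfl,
    Gs (y := ((n + 2 : ℕ) : ℝ) + γ + 1) (x := (n : ℝ) + γ + 1 + 1) (by linarith) (by push_cast; ring),
    Gs (y := (n : ℝ) + γ + 1 + 1) h2 rfl]
  have := Real.Gamma_pos_of_pos h2
  have h3 : 0 < (n : ℝ) + γ + 1 + 1 := by linarith
  rw [show (n : ℝ) + (γ + 1) = n + γ + 1 by ring, show (n : ℝ) + (γ + 2) = n + γ + 1 + 1 by ring]
  field_simp
  ring

lemma Rn_pos (γ η : ℝ) (hγ : -(1 / 2) < γ) (hη : 0 < η) (n : ℕ) : 0 < Rn γ η n := by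
  have hn : (0 : ℝ) ≤ n := by positivity
  exact div_pos (Real.Gamma_pos_of_pos (by linarith)) (Real.Gamma_pos_of_pos (by linarith))

lemma Nn_pos (γ η : ℝ) (hγ : -(1 / 2) < γ) (hη : 0 < η) (n : ℕ) : 0 < Nn γ η n := by
  have hn : (0 : ℝ) ≤ n := by positivity
  unfold Nn; linarith

noncomputable def Qn (γ η : ℝ) (n : ℕ) : ℝ :=
  Rn γ η n * Iw n * Nn γ η n ^ (-(η - 1 / 2)) * (Real.sqrt (2 * π))⁻¹

lemma Qn_pos (γ η : ℝ) (hγ : -(1 / 2) < γ) (hη : 0 < η) (n : ℕ) : 0 < Qn γ η n := by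
  have := Rn_pos γ η hγ hη n
  have := Nn_pos γ η hγ hη n
  have := Iw_pos n
  have := Real.pi_pos
  unfold Qn; positivity

lemma Qn_tendsto (γ η : ℝ) (hγ : -(1 / 2) < γ) (hη : 0 < η) :
    Tendsto (Qn γ η) atTop (𝓝 1) := by
  have h1 := gamma_ratio_tend (γ + η) γ (by linarith) (by linarith)
  have h2 := Iw_tendsto.mul_const (Real.sqrt (2 * π))⁻¹
  rw [mul_inv_cancel₀ (by positivity)] at h2
  have h3 : Tendsto (fun n : ℕ => (Nn γ η n / n) ^ (-(η - 1 / 2))) atTop (𝓝 1) := by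
    have : Tendsto (fun n : ℕ => Nn γ η n / n) atTop (𝓝 1) := by
      have := ((tendsto_natCast_div_add_atTop ((γ + η + 1) / 2 : ℝ))).inv₀ one_ne_zero
      rw [inv_one] at this
      refine this.congr fun n => ?_
      rw [inv_div]; rfl
    have := this.rpow_const (p := -(η - 1 / 2)) (Or.inl one_ne_zero)
    simpa using this
  have h4 := (h1.mul h2).mul h3
  simp only [mul_one] at h4
  refine h4.congr' ?_
  filter_upwards [eventually_gt_atTop 0] with n hn
  have hn' : (0 : ℝ) < n := by exact_mod_cast hn
  have hN := Nn_pos γ η hγ hη n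
  rw [Real.div_rpow hN.le hn'.le, Real.sqrt_eq_rpow]
  have e : (n : ℝ) ^ (-(η - 1 / 2)) = (n : ℝ) ^ (γ - (γ + η)) * (n : ℝ) ^ (1 / 2 : ℝ) := by
    rw [← Real.rpow_add hn']; congr 1; ring
  rw [e]
  simp only [Qn, Rn]
  have e1 : 0 < (n : ℝ) ^ (γ - (γ + η)) := by positivity
  have e2 : 0 < (n : ℝ) ^ (1 / 2 : ℝ) := by positivity
  rw [show (n : ℝ) + (γ + η) + 1 = n + γ + η + 1 by ring]
  have e3 := Real.sqrt_pos.2 (show 0 < 2 * π by positivity)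
  have e4 := Real.Gamma_pos_of_pos (show 0 < (n : ℝ) + γ + 1 by linarith)
  field_simp

lemma log_Qn (γ η : ℝ) (hγ : -(1 / 2) < γ) (hη : 0 < η) :
    (fun n => Real.log (Qn γ η n) - (γ * η / 2 + (γ + η) / 4) * (Nn γ η n)⁻¹) =O[atTop]
      fun n : ℕ => ((n : ℝ) ^ 2)⁻¹ := by
  set κ := γ * η / 2 + (γ + η) / 4 with hκ
  apply telescope2
  · have h1 : Tendsto (fun n => Real.log (Qn γ η n)) atTop (𝓝 0) := by
      have := (Qn_tendsto γ η hγ hη).log one_ne_zero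
      simpa using this
    have h2 : Tendsto (fun n => κ * (Nn γ η n)⁻¹) atTop (𝓝 (κ * 0)) := by
      refine Tendsto.const_mul _ (tendsto_inv_atTop_zero.comp ?_)
      exact tendsto_atTop_add_const_right _ _ tendsto_natCast_atTop_atTop
    have := h1.sub h2
    simpa using this
  · set ν := (γ + η + 1) / 2 with hν
    have big := ((((((lE_O (γ + η + 1)).add (lE_O (γ + η + 2))).sub (lE_O (γ + 1))).sub (lE_O (γ + 2))).add
      (lE_O 1)).sub (lE_O 2)).sub (((lE_O (ν + 2)).sub (lE_O ν)).const_mul_left (η - 1 / 2))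
    have big2 := big.sub (((iE_O (ν + 2)).sub (iE_O ν)).const_mul_left κ)
    refine big2.congr' ?_ EventuallyEq.rfl
    filter_upwards [eventually_gt_atTop 0] with n hn
    have hn' : (0 : ℝ) < n := by exact_mod_cast hn
    have lQ : ∀ n, Real.log (Qn γ η n) = Real.log (Rn γ η n) + Real.log (Iw n) -
        (η - 1 / 2) * Real.log (Nn γ η n) - Real.log (Real.sqrt (2 * π)) := by
      intro n
      have a1 := Rn_pos γ η hγ hη n
      have a2 := Nn_pos γ η hγ hη n
      have a3 := Iw_pos n
      have a4 := Real.sqrt_pos.2 (show 0 < 2 * π by positivity)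
      unfold Qn
      rw [Real.log_mul (by positivity) (by positivity), Real.log_mul (by positivity) (by positivity),
        Real.log_mul (by positivity) (by positivity), Real.log_rpow a2, Real.log_inv]
      ring
    have lR : Real.log (Rn γ η (n + 2)) = Real.log ((n : ℝ) + (γ + η + 1)) + Real.log ((n : ℝ) + (γ + η + 2))
        - Real.log ((n : ℝ) + (γ + 1)) - Real.log ((n : ℝ) + (γ + 2)) + Real.log (Rn γ η n) := by
      have a1 := Rn_pos γ η hγ hη n
      have b1 : 0 < (n : ℝ) + (γ + η + 1) := by linarith
      have b2 : 0 < (n : ℝ) + (γ + η + 2) := by linarith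
      have b3 : 0 < (n : ℝ) + (γ + 1) := by linarith
      have b4 : 0 < (n : ℝ) + (γ + 2) := by linarith
      rw [Rn_succ2 γ η hγ hη, Real.log_mul (by positivity) (by positivity), Real.log_div (by positivity) (by positivity),
        Real.log_mul (by positivity) (by positivity), Real.log_mul (by positivity) (by positivity)]
      ring
    have lI : Real.log (Iw (n + 2)) = Real.log ((n : ℝ) + 1) - Real.log ((n : ℝ) + 2) + Real.log (Iw n) := by
      have a3 := Iw_pos n
      rw [Iw_succ2, Real.log_mul (by positivity) (by positivity), Real.log_div (by positivity) (by positivity)]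
    have lN : Nn γ η (n + 2) = (n : ℝ) + (ν + 2) := by simp only [Nn, hν]; push_cast; ring
    have lN' : Nn γ η n = (n : ℝ) + ν := rfl
    rw [lQ, lQ, lR, lI, lN, lN']
    simp only [lE, iE, Pi.sub_apply, Pi.add_apply]
    rw [hκ, hν]
    ring

lemma Qn_asymp (γ η : ℝ) (hγ : -(1 / 2) < γ) (hη : 0 < η) :
    (fun n => Qn γ η n - 1 - (γ * η / 2 + (γ + η) / 4) * (Nn γ η n)⁻¹) =O[atTop]
      fun n : ℕ => ((n : ℝ) ^ 2)⁻¹ := by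
  set κ := γ * η / 2 + (γ + η) / 4 with hκ
  have h1 := log_Qn γ η hγ hη
  have hlim : Tendsto (fun n => Real.log (Qn γ η n)) atTop (𝓝 0) := by
    have := (Qn_tendsto γ η hγ hη).log one_ne_zero
    simpa using this
  have hN : (fun n => (Nn γ η n)⁻¹) =O[atTop] fun n : ℕ => ((n : ℝ))⁻¹ := by
    refine IsBigO.of_bound 1 ?_
    filter_upwards [eventually_gt_atTop 0] with n hn
    have hn' : (0 : ℝ) < n := by exact_mod_cast hn
    have := Nn_pos γ η hγ hη n
    rw [Real.norm_eq_abs, Real.norm_eq_abs, abs_of_pos (by positivity), abs_of_pos (by positivity), one_mul]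
    have : (n : ℝ) ≤ Nn γ η n := by unfold Nn; linarith
    gcongr
  have h21 : (fun n : ℕ => ((n : ℝ) ^ 2)⁻¹) =O[atTop] fun n : ℕ => ((n : ℝ))⁻¹ := by
    refine IsBigO.of_bound 1 ?_
    filter_upwards [eventually_gt_atTop 0] with n hn
    have hn' : (1 : ℝ) ≤ n := by exact_mod_cast hn
    rw [Real.norm_eq_abs, Real.norm_eq_abs, abs_of_pos (by positivity), abs_of_pos (by positivity), one_mul]
    gcongr
    nlinarith
  have h2 : (fun n => Real.log (Qn γ η n)) =O[atTop] fun n : ℕ => ((n : ℝ))⁻¹ := by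
    have := (h1.trans h21).add (hN.const_mul_left κ)
    refine this.congr_left fun n => ?_
    rw [hκ]; ring
  have h3 : (fun n => Qn γ η n - 1 - Real.log (Qn γ η n)) =O[atTop] fun n : ℕ => ((n : ℝ) ^ 2)⁻¹ := by
    have h4 : (fun n => Qn γ η n - 1 - Real.log (Qn γ η n)) =O[atTop]
        fun n => Real.log (Qn γ η n) ^ 2 := by
      refine IsBigO.of_bound 1 ?_
      have : ∀ᶠ n in atTop, |Real.log (Qn γ η n)| < 1 := by
        have := hlim.abs
        rw [abs_zero] at this
        exact this.eventually (gt_mem_nhds one_pos)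
      filter_upwards [this] with n hn
      have := Real.abs_exp_sub_one_sub_id_le hn.le
      rw [Real.exp_log (Qn_pos γ η hγ hη n)] at this
      rw [Real.norm_eq_abs, Real.norm_eq_abs, one_mul, abs_of_nonneg (sq_nonneg (Real.log (Qn γ η n)))]
      exact this
    refine h4.trans ?_
    have := h2.pow 2
    simpa using this
  have := h3.add h1
  refine this.congr' ?_ EventuallyEq.rfl
  refine Eventually.of_forall fun n => ?_
  simp only
  ring
end

section
open Filter Topology Asymptotics

lemma iter_cpow (A : ℝ) (n k : ℕ) (hA : (n : ℝ) - 1 < A) (hk : k ≤ n) :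
    ∀ z ∈ Metric.ball (0 : ℂ) 1, iteratedDeriv k (fun x : ℂ => (1 + x) ^ (A : ℂ)) z =
      ((Real.Gamma (A + 1) / Real.Gamma (A + 1 - k) : ℝ) : ℂ) * (1 + z) ^ ((A : ℂ) - k) := by
  induction k with
  | zero =>
    intro z hz
    have : Real.Gamma (A + 1) ≠ 0 := by
      refine (Real.Gamma_pos_of_pos ?_).ne'
      have : (0 : ℝ) ≤ n := by positivity
      linarith
    simp [this]
  | succ k ih =>
    intro z hz
    have hk' : ((k : ℝ) + 1) ≤ n := by exact_mod_cast hk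
    have hpos : 0 < A - k := by linarith
    have ih' := ih (by omega)
    have hev : iteratedDeriv k (fun x : ℂ => (1 + x) ^ (A : ℂ)) =ᶠ[𝓝 z]
        fun z => ((Real.Gamma (A + 1) / Real.Gamma (A + 1 - k) : ℝ) : ℂ) * (1 + z) ^ ((A : ℂ) - k) := by
      filter_upwards [Metric.isOpen_ball.mem_nhds hz] with y hy using ih' y hy
    rw [iteratedDeriv_succ, hev.deriv_eq]
    have hsl : (1 + z) ∈ Complex.slitPlane := by
      apply Complex.mem_slitPlane_of_norm_lt_one
      simpa using hz
    have hd : HasDerivAt (fun z : ℂ => ((Real.Gamma (A + 1) / Real.Gamma (A + 1 - k) : ℝ) : ℂ) * (1 + z) ^ ((A : ℂ) - k))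
      _ z := (((hasDerivAt_id z).const_add 1).cpow_const (c := (A : ℂ) - k) hsl).const_mul _
    rw [hd.deriv]
    have hG : Real.Gamma (A + 1 - k) = (A - k) * Real.Gamma (A + 1 - ((k + 1 : ℕ) : ℝ)) := by
      rw [show A + 1 - ((k + 1 : ℕ) : ℝ) = A - k by push_cast; ring]
      exact Gs hpos (by ring)
    have hG2 : 0 < Real.Gamma (A + 1 - ((k + 1 : ℕ) : ℝ)) :=
      Real.Gamma_pos_of_pos (by push_cast; linarith)
    have e : ((A : ℂ) - ((k + 1 : ℕ) : ℂ)) = (A : ℂ) - k - 1 := by push_cast; ring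
    rw [e, hG]
    have hc : ((A : ℂ) - k) ≠ 0 := by
      have : ((A - k : ℝ) : ℂ) ≠ 0 := by exact_mod_cast hpos.ne'
      simpa using this
    have hG2c : ((Real.Gamma (A + 1 - ((k + 1 : ℕ) : ℝ)) : ℝ) : ℂ) ≠ 0 := by exact_mod_cast hG2.ne'
    simp only [id, Complex.ofReal_div, Complex.ofReal_mul, Complex.ofReal_sub, Complex.ofReal_natCast] at hG2c ⊢
    field_simp

/-- the generating function -/
noncomputable def gf (A B : ℝ) (z : ℂ) : ℂ := (1 + -z) ^ (B : ℂ) * (1 + z) ^ (A : ℂ)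

lemma iter_gf (γ η : ℝ) (hγ : -1 < γ) (hη : -1 < η) (n : ℕ) :
    iteratedDeriv n (gf (n + γ) (n + η)) 0 = ((Nat.factorial n * 2 ^ n * jacobiP γ η n 0 : ℝ) : ℂ) := by
  have hF : ∀ A : ℝ, ContDiffAt ℂ n (fun x : ℂ => (1 + x) ^ (A : ℂ)) 0 := by
    intro A
    exact (Complex.one_add_cpow_hasFPowerSeriesAt_zero (a := (A : ℂ))).analyticAt.contDiffAt
  have hF' : ∀ A : ℝ, ContDiffAt ℂ n (fun x : ℂ => (1 + -x) ^ (A : ℂ)) 0 := by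
    intro A
    have h1 : ContDiffAt ℂ n (fun x : ℂ => (1 + x) ^ (A : ℂ)) (-0) := by simpa using hF A
    exact h1.comp (f := fun x : ℂ => -x) 0 contDiff_neg.contDiffAt
  unfold gf
  rw [iteratedDeriv_fun_mul (hF' _) (hF _)]
  unfold jacobiP
  rw [Finset.mul_sum, Complex.ofReal_sum]
  refine Finset.sum_congr rfl fun s hs => ?_
  have hs' : s ≤ n := by simpa [Nat.lt_succ_iff] using hs
  rw [iteratedDeriv_comp_neg s (fun x : ℂ => (1 + x) ^ (((n : ℝ) + η : ℝ) : ℂ)), neg_zero,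
    iter_cpow _ n s (by linarith) hs' 0 (by simp), iter_cpow _ n (n - s) (by linarith) (by omega) 0 (by simp)]
  rw [add_zero, Complex.one_cpow, Complex.one_cpow, mul_one, mul_one]
  rw [Nat.cast_choose ℂ hs']
  have e1 : (n : ℝ) + η + 1 - s = n - s + η + 1 := by ring
  have e2 : (n : ℝ) + γ + 1 - ((n - s : ℕ) : ℝ) = s + γ + 1 := by
    rw [Nat.cast_sub hs']; ring
  rw [e1, e2]
  have e3 : (((0 : ℝ) - 1) / 2) ^ s * ((0 + 1) / 2) ^ (n - s) = (-1) ^ s / 2 ^ n := by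
    have : (2 : ℝ) ^ n = 2 ^ s * 2 ^ (n - s) := by rw [← pow_add]; congr 1; omega
    rw [this, zero_sub, zero_add, div_pow, div_pow, one_pow]; field_simp
  rw [mul_assoc _ _ (((0 + 1 : ℝ) / 2) ^ (n - s)), e3]
  push_cast
  simp only [smul_eq_mul]
  have f1 : (Nat.factorial s : ℂ) ≠ 0 := by exact_mod_cast Nat.factorial_ne_zero s
  have f2 : (Nat.factorial (n - s) : ℂ) ≠ 0 := by exact_mod_cast Nat.factorial_ne_zero (n - s)
  have hsr : (s : ℝ) ≤ n := by exact_mod_cast hs'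
  have f3 : ((Real.Gamma ((n:ℝ) - s + η + 1) : ℝ) : ℂ) ≠ 0 := by
    exact_mod_cast (Real.Gamma_pos_of_pos (by linarith)).ne'
  have f4 : ((Real.Gamma ((s:ℝ) + γ + 1) : ℝ) : ℂ) ≠ 0 := by
    have : (0 : ℝ) ≤ s := by positivity
    exact_mod_cast (Real.Gamma_pos_of_pos (by linarith)).ne'
  field_simp

lemma gf_diffContOnCl (A B : ℝ) (hA : 0 < A) (hB : 0 < B) : DiffContOnCl ℂ (gf A B) (Metric.ball 0 1) := by
  have hre : ∀ z : ℂ, ‖z‖ ≤ 1 → 0 ≤ (1 + z).re := by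
    intro z hz
    have := (abs_le.1 ((Complex.abs_re_le_norm z).trans hz)).1
    simp; linarith
  constructor
  · intro z hz
    have h1 : (1 + z) ∈ Complex.slitPlane := Complex.mem_slitPlane_of_norm_lt_one (by simpa using hz)
    have h2 : (1 + -z) ∈ Complex.slitPlane := Complex.mem_slitPlane_of_norm_lt_one (by simpa using hz)
    refine DifferentiableAt.differentiableWithinAt ?_
    unfold gf
    have d1 : DifferentiableAt ℂ (fun z : ℂ => (1 + -z) ^ (B : ℂ)) z :=
      DifferentiableAt.cpow_const (f := fun z : ℂ => 1 + -z) (by fun_prop) h2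
    have d2 : DifferentiableAt ℂ (fun z : ℂ => (1 + z) ^ (A : ℂ)) z :=
      DifferentiableAt.cpow_const (f := fun z : ℂ => 1 + z) (by fun_prop) h1
    exact d1.mul d2
  · rw [closure_ball _ one_ne_zero]
    intro z hz
    have hz' : ‖z‖ ≤ 1 := by simpa using hz
    refine ContinuousAt.continuousWithinAt ?_
    unfold gf
    have c1 := Complex.continuousAt_cpow_const_of_re_pos (z := 1 + z) (w := (A : ℂ)) (Or.inl (hre z hz')) (by simpa using hA)
    have c2 := Complex.continuousAt_cpow_const_of_re_pos (z := 1 + -z) (w := (B : ℂ)) (Or.inl (hre (-z) (by simpa using hz'))) (by simpa using hB)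
    exact (ContinuousAt.comp (f := fun z : ℂ => 1 + -z) c2 (by fun_prop)).mul
      (ContinuousAt.comp (f := fun z : ℂ => 1 + z) c1 (by fun_prop))

noncomputable def gH (A B : ℝ) (n : ℕ) (θ : ℝ) : ℂ :=
  Complex.exp (-(n * θ * Complex.I)) * gf A B (Complex.exp (θ * Complex.I))

lemma gH_int (γ η : ℝ) (hγ : -1 < γ) (hη : -1 < η) (n : ℕ) (hn : 1 ≤ n) :
    ∫ θ in (0:ℝ)..2 * π, gH (n + γ) (n + η) n θ = ((2 * π * 2 ^ n * jacobiP γ η n 0 : ℝ) : ℂ) := by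
  have hn' : (1 : ℝ) ≤ n := by exact_mod_cast hn
  have h := (gf_diffContOnCl (n + γ) (n + η) (by linarith) (by linarith)).circleIntegral_one_div_sub_center_pow_smul
    one_pos n
  rw [iter_gf γ η hγ hη n] at h
  unfold circleIntegral at h
  have e : ∀ θ : ℝ, deriv (circleMap 0 1) θ • (1 / (circleMap 0 1 θ - 0) ^ (n + 1)) •
      gf (n + γ) (n + η) (circleMap 0 1 θ) = Complex.I * gH (n + γ) (n + η) n θ := by
    intro θ
    simp only [deriv_circleMap, circleMap, gH, smul_eq_mul, zero_add, Complex.ofReal_one, one_mul, sub_zero]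
    have e0 : Complex.exp (n * θ * Complex.I) = Complex.exp (θ * Complex.I) ^ n := by
      rw [mul_assoc, Complex.exp_nat_mul]
    rw [Complex.exp_neg, e0]
    have := Complex.exp_ne_zero (θ * Complex.I)
    field_simp
    ring
  simp only [e] at h
  rw [intervalIntegral.integral_const_mul] at h
  have hI : Complex.I ≠ 0 := Complex.I_ne_zero
  apply mul_left_cancel₀ hI
  rw [h]
  have f1 : (Nat.factorial n : ℂ) ≠ 0 := by exact_mod_cast Nat.factorial_ne_zero n
  push_cast
  simp only [smul_eq_mul]
  field_simp
end

section
open Filter Topology Asymptotics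

lemma polar_cpow (r φ A : ℝ) (hr : 0 < r) (h1 : -π < φ) (h2 : φ ≤ π) :
    ((r : ℂ) * Complex.exp (φ * Complex.I)) ^ (A : ℂ) = ((r ^ A : ℝ) : ℂ) * Complex.exp ((A * φ : ℝ) * Complex.I) := by
  have hne : (r : ℂ) * Complex.exp (φ * Complex.I) ≠ 0 :=
    mul_ne_zero (by exact_mod_cast hr.ne') (Complex.exp_ne_zero _)
  rw [Complex.cpow_def_of_ne_zero hne, Complex.log_ofReal_mul hr (Complex.exp_ne_zero _),
    Complex.log_exp (by simpa using h1) (by simpa using h2), Real.rpow_def_of_pos hr, add_mul, Complex.exp_add]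
  push_cast
  congr 2
  ring

lemma one_add_exp (θ : ℝ) : 1 + Complex.exp (θ * Complex.I) =
    ((2 * cos (θ / 2) : ℝ) : ℂ) * Complex.exp ((θ / 2 : ℝ) * Complex.I) := by
  apply Complex.ext
  · rw [Complex.add_re, Complex.one_re, Complex.exp_ofReal_mul_I_re, Complex.re_ofReal_mul, Complex.exp_ofReal_mul_I_re]
    have h := cos_sq (θ / 2)
    rw [show 2 * (θ / 2) = θ by ring] at h
    nlinarith
  · rw [Complex.add_im, Complex.one_im, Complex.exp_ofReal_mul_I_im, Complex.im_ofReal_mul, Complex.exp_ofReal_mul_I_im]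
    have h := sin_two_mul (θ / 2)
    rw [show 2 * (θ / 2) = θ by ring] at h
    linarith

lemma one_sub_exp (θ : ℝ) : 1 + -Complex.exp (θ * Complex.I) =
    ((2 * sin (θ / 2) : ℝ) : ℂ) * Complex.exp (((θ - π) / 2 : ℝ) * Complex.I) := by
  have h := one_add_exp (θ - π)
  have e : Complex.exp (((θ - π : ℝ) : ℂ) * Complex.I) = -Complex.exp (θ * Complex.I) := by
    push_cast
    rw [sub_mul, Complex.exp_sub, Complex.exp_pi_mul_I, div_neg, div_one]
  rw [e] at h
  rw [h, show (θ - π) / 2 = θ / 2 - π / 2 by ring, cos_sub_pi_div_two]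

lemma gH_re (γ η : ℝ) (n : ℕ) (θ : ℝ) (h0 : 0 < θ) (h1 : θ < π) :
    (gH (n + γ) (n + η) n θ).re = 2 ^ n * (sin θ ^ n * ((2 * cos (θ / 2)) ^ γ * (2 * sin (θ / 2)) ^ η *
      cos ((γ + η) / 2 * (θ - π / 2) - (n * π / 2 + (η - γ) * π / 4)))) := by
  obtain ⟨hs, hc⟩ := sc_half_pos h0 h1
  unfold gH gf
  rw [one_add_exp, one_sub_exp, polar_cpow _ _ _ (by positivity) (by linarith) (by linarith),
    polar_cpow _ _ _ (by positivity) (by linarith) (by linarith)]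
  have e1 : ((2 * cos (θ / 2)) ^ ((n : ℝ) + γ)) * ((2 * sin (θ / 2)) ^ ((n : ℝ) + η)) =
      2 ^ n * sin θ ^ n * ((2 * cos (θ / 2)) ^ γ * (2 * sin (θ / 2)) ^ η) := by
    rw [rpow_add (by positivity), rpow_add (by positivity), rpow_natCast, rpow_natCast]
    have : sin θ = 2 * sin (θ / 2) * cos (θ / 2) := by
      rw [← sin_two_mul]; congr 1; ring
    rw [this, mul_pow, mul_pow, mul_pow, mul_pow]
    ring
  have e2 : Complex.exp (-(n * θ * Complex.I)) *
      (((((2 * sin (θ / 2)) ^ ((n : ℝ) + η) : ℝ) : ℂ) * Complex.exp ((((n : ℝ) + η) * ((θ - π) / 2) : ℝ) * Complex.I)) *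
      (((((2 * cos (θ / 2)) ^ ((n : ℝ) + γ) : ℝ) : ℂ) * Complex.exp ((((n : ℝ) + γ) * (θ / 2) : ℝ) * Complex.I)))) =
      (((((2 * cos (θ / 2)) ^ ((n : ℝ) + γ)) * ((2 * sin (θ / 2)) ^ ((n : ℝ) + η)) : ℝ)) : ℂ) *
       Complex.exp (((γ + η) / 2 * (θ - π / 2) - (n * π / 2 + (η - γ) * π / 4) : ℝ) * Complex.I) := by
    have : Complex.exp (((γ + η) / 2 * (θ - π / 2) - (n * π / 2 + (η - γ) * π / 4) : ℝ) * Complex.I) =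
      Complex.exp (-(n * θ * Complex.I)) * Complex.exp ((((n : ℝ) + η) * ((θ - π) / 2) : ℝ) * Complex.I) *
      Complex.exp ((((n : ℝ) + γ) * (θ / 2) : ℝ) * Complex.I) := by
      rw [← Complex.exp_add, ← Complex.exp_add]
      congr 1
      push_cast
      ring
    rw [this]
    push_cast
    ring
  rw [e2, e1, Complex.re_ofReal_mul, Complex.exp_ofReal_mul_I_re]
  ring

lemma gH_cont (A B : ℝ) (hA : 0 < A) (hB : 0 < B) (n : ℕ) : Continuous (gH A B n) := by
  unfold gH
  refine Continuous.mul (by fun_prop) ?_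
  have h := (gf_diffContOnCl A B hA hB).continuousOn
  rw [closure_ball _ one_ne_zero] at h
  refine h.comp_continuous (by fun_prop) ?_
  intro θ
  simp [Complex.norm_exp_ofReal_mul_I]

lemma gf_conj (A B : ℝ) (z : ℂ) (hz : ‖z‖ ≤ 1) :
    gf A B ((starRingEnd ℂ) z) = (starRingEnd ℂ) (gf A B z) := by
  have hre : ∀ z : ℂ, ‖z‖ ≤ 1 → (1 + z).arg ≠ π := by
    intro z hz h
    have := (abs_le.1 ((Complex.abs_re_le_norm z).trans hz)).1
    rw [Complex.arg_eq_pi_iff] at h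
    have h' := h.1
    simp at h'
    linarith
  unfold gf
  have e1 : (1 : ℂ) + (starRingEnd ℂ) z = (starRingEnd ℂ) (1 + z) := by simp
  have e2 : (1 : ℂ) + -(starRingEnd ℂ) z = (starRingEnd ℂ) (1 + -z) := by simp
  rw [e1, e2, Complex.conj_cpow _ _ (hre z hz), Complex.conj_cpow _ _ (hre (-z) (by simpa using hz)), map_mul]
  simp

lemma gH_neg (A B : ℝ) (n : ℕ) (θ : ℝ) : (gH A B n (-θ)).re = (gH A B n θ).re := by
  have : gH A B n (-θ) = (starRingEnd ℂ) (gH A B n θ) := by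
    unfold gH
    rw [map_mul, ← gf_conj _ _ _ (by simp [Complex.norm_exp_ofReal_mul_I]), ← Complex.exp_conj, ← Complex.exp_conj]
    simp
  rw [this, Complex.conj_re]

lemma jacobiP_zero_int0 (γ η : ℝ) (hγ : -1 < γ) (hη : -1 < η) (n : ℕ) (hn : 1 ≤ n) :
    jacobiP γ η n 0 = π⁻¹ * ∫ θ in (0:ℝ)..π, sin θ ^ n * ((2 * cos (θ / 2)) ^ γ * (2 * sin (θ / 2)) ^ η *
      cos ((γ + η) / 2 * (θ - π / 2) - (n * π / 2 + (η - γ) * π / 4))) := by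
  have hn' : (1 : ℝ) ≤ n := by exact_mod_cast hn
  have h := gH_int γ η hγ hη n hn
  have hc := gH_cont (n + γ) (n + η) (by linarith) (by linarith) n
  have hcr : Continuous fun θ => (gH (n + γ) (n + η) n θ).re := Complex.continuous_re.comp hc
  have hre : ∫ θ in (0:ℝ)..2 * π, (gH (n + γ) (n + η) n θ).re = 2 * π * 2 ^ n * jacobiP γ η n 0 := by
    have := congrArg Complex.re h
    rw [Complex.ofReal_re] at this
    rw [← this]
    exact Complex.reCLM.intervalIntegral_comp_comm (hc.intervalIntegrable _ _)
  have hper : Function.Periodic (fun θ => (gH (n + γ) (n + η) n θ).re) (2 * π) := by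
    intro θ
    simp only
    unfold gH
    have e1 : Complex.exp (((θ + 2 * π : ℝ) : ℂ) * Complex.I) = Complex.exp (θ * Complex.I) := by
      push_cast
      rw [add_mul, Complex.exp_periodic]
    have e2 : Complex.exp (-(n * ((θ + 2 * π : ℝ) : ℂ) * Complex.I)) = Complex.exp (-(n * θ * Complex.I)) := by
      rw [Complex.exp_neg, Complex.exp_neg, mul_assoc, Complex.exp_nat_mul, e1, mul_assoc (n : ℂ), Complex.exp_nat_mul]
    rw [e1, e2]
  have h2 := hper.intervalIntegral_add_eq 0 (-π)
  rw [zero_add, hre, show -π + 2 * π = π by ring, ← intervalIntegral.integral_add_adjacent_intervals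
    (hcr.intervalIntegrable (-π) 0) (hcr.intervalIntegrable 0 π)] at h2
  have h3 : ∫ θ in (-π)..0, (gH (n + γ) (n + η) n θ).re = ∫ θ in (0:ℝ)..π, (gH (n + γ) (n + η) n θ).re := by
    have := intervalIntegral.integral_comp_neg (a := 0) (b := π) (fun θ => (gH (n + γ) (n + η) n θ).re)
    rw [neg_zero] at this
    rw [← this]
    simp only [gH_neg]
  rw [h3, intervalIntegral.integral_congr_Ioo_of_le pi_pos.le
    (fun θ hθ => gH_re γ η n θ hθ.1 hθ.2), intervalIntegral.integral_const_mul] at h2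
  have : (2 : ℝ) ^ n ≠ 0 := by positivity
  have hpi := pi_pos.ne'
  refine mul_left_cancel₀ this ?_
  refine mul_left_cancel₀ hpi ?_
  rw [mul_left_comm π (2 ^ n) (π⁻¹ * _), mul_inv_cancel_left₀ hpi]
  linarith

/-- amplitude in the Laplace integral -/
noncomputable def rho (γ η t : ℝ) : ℝ := (2 * cos (π / 4 + t / 2)) ^ γ * (2 * sin (π / 4 + t / 2)) ^ η

lemma jacobiP_zero_int (γ η : ℝ) (hγ : -1 < γ) (hη : -1 < η) (n : ℕ) (hn : 1 ≤ n) :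
    jacobiP γ η n 0 = π⁻¹ * ∫ t in (-(π / 2))..(π / 2), cos t ^ n * (rho γ η t *
      cos ((γ + η) / 2 * t - (n * π / 2 + (η - γ) * π / 4))) := by
  rw [jacobiP_zero_int0 γ η hγ hη n hn]
  have := intervalIntegral.integral_comp_add_right (a := -(π / 2)) (b := π / 2)
    (fun θ => sin θ ^ n * ((2 * cos (θ / 2)) ^ γ * (2 * sin (θ / 2)) ^ η *
      cos ((γ + η) / 2 * (θ - π / 2) - (n * π / 2 + (η - γ) * π / 4)))) (π / 2)
  rw [show -(π / 2) + π / 2 = 0 by ring, show π / 2 + π / 2 = π by ring] at this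
  rw [← this]
  congr 1
  refine intervalIntegral.integral_congr fun t _ => ?_
  simp only [rho]
  rw [sin_add_pi_div_two, show (t + π / 2) / 2 = π / 4 + t / 2 by ring, show t + π / 2 - π / 2 = t by ring]
end

section
open Filter Topology Asymptotics

lemma even_taylor (f : ℝ → ℝ) (hf : AnalyticAt ℝ f 0) (c0 c2 : ℝ) (h0 : f 0 = c0)
    (h2 : iteratedDeriv 2 f 0 = 2 * c2) :
    (fun t : ℝ => f t + f (-t) - 2 * c0 - 2 * c2 * t ^ 2) =O[𝓝 0] fun t => t ^ 4 := by
  have h := hf.hasFPowerSeriesAt.isBigO_sub_partialSum_pow 4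
  have hneg : Tendsto (fun t : ℝ => -t) (𝓝 0) (𝓝 0) := by
    have : Continuous fun t : ℝ => -t := continuous_neg
    simpa using this.tendsto 0
  have h' := h.comp_tendsto hneg
  have e1 : ((fun y : ℝ => ‖y‖ ^ 4) ∘ fun t => -t) = fun t => t ^ 4 := by
    funext t
    simp [Even.pow_abs (show Even 4 by decide), Even.neg_pow (show Even 4 by decide)]
  have e2 : (fun y : ℝ => ‖y‖ ^ 4) = fun t => t ^ 4 := by
    funext t
    simp [Even.pow_abs (show Even 4 by decide)]
  rw [e1] at h'
  rw [e2] at h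
  refine (h.add h').congr_left fun t => ?_
  simp only [Function.comp, FormalMultilinearSeries.partialSum, Finset.sum_range_succ, Finset.sum_range_zero,
    FormalMultilinearSeries.ofScalars_apply_eq, smul_eq_mul, zero_add, iteratedDeriv_zero, h0, h2, Nat.factorial]
  push_cast
  ring

lemma trig_bd (f : ℝ → ℝ) (c0 c2 K : ℝ) (hK : ∀ t, -(π / 2) < t → t < π / 2 → |f t| ≤ K / cos t)
    (h : (fun t : ℝ => f t + f (-t) - 2 * c0 - 2 * c2 * t ^ 2) =O[𝓝 0] fun t => t ^ 4) :
    ∃ M, 0 ≤ M ∧ ∀ t, -(π / 2) < t → t < π / 2 →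
      |f t + f (-t) - 2 * c0 - 2 * c2 * sin t ^ 2| ≤ M * sin t ^ 4 / cos t := by
  obtain ⟨C, hC⟩ := h.bound
  obtain ⟨δ, hδ, hb⟩ := Metric.eventually_nhds_iff.1 hC
  have hKnn : 0 ≤ K := by
    have := hK 0 (by linarith [pi_pos]) (by linarith [pi_pos])
    simp at this
    exact (abs_nonneg _).trans this
  set d := min (δ / 2) 1 with hd
  have hd0 : 0 < d := by positivity
  have hd1 : d ≤ 1 := min_le_right _ _
  have hdδ : d < δ := lt_of_le_of_lt (min_le_left _ _) (by linarith)
  have hpi : 3 < π := pi_gt_three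
  have hsd : 0 < sin d := sin_pos_of_pos_of_lt_pi hd0 (by linarith)
  -- it suffices to treat nonnegative arguments
  suffices H : ∃ M, 0 ≤ M ∧ ∀ t, 0 ≤ t → t < π / 2 →
      |f t + f (-t) - 2 * c0 - 2 * c2 * sin t ^ 2| ≤ M * sin t ^ 4 / cos t by
    obtain ⟨M, hM0, hM⟩ := H
    refine ⟨M, hM0, fun t h1 h2 => ?_⟩
    rcases le_total 0 t with h0 | h0
    · exact hM t h0 h2
    · have := hM (-t) (by linarith) (by linarith)
      simp only [neg_neg, sin_neg, cos_neg, neg_sq, Even.neg_pow (show Even 4 by decide)] at this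
      rwa [add_comm (f t)]
  refine ⟨16 * (|C| + 2 * |c2|) + (2 * K + 2 * |c0| + 2 * |c2|) / sin d ^ 4, by positivity, fun t h0 h1 => ?_⟩
  have hc : 0 < cos t := cos_pos_of_mem_Ioo ⟨by linarith, h1⟩
  have hs : 0 ≤ sin t := sin_nonneg_of_nonneg_of_le_pi h0 (by linarith)
  have hc1 : cos t ≤ 1 := cos_le_one t
  have hs1 : sin t ≤ 1 := sin_le_one t
  rw [add_mul, add_div]
  rcases le_total t d with htd | htd
  · have h3 := hb (y := t) (by rw [dist_zero_right, norm_eq_abs, abs_of_nonneg h0]; linarith)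
    rw [norm_eq_abs, norm_eq_abs, abs_of_nonneg (by positivity : 0 ≤ t ^ 4)] at h3
    have hst : sin t ≤ t := sin_le h0
    have hst2 := Real.sin_ge_sub_cube h0
    have h4 : |t ^ 2 - sin t ^ 2| ≤ t ^ 4 := by
      rw [abs_of_nonneg (by nlinarith)]
      have : t ^ 2 - sin t ^ 2 = (t - sin t) * (t + sin t) := by ring
      rw [this]
      calc (t - sin t) * (t + sin t) ≤ (t ^ 3 / 6) * (t + t) := by
            apply mul_le_mul <;> first | positivity | linarith
        _ ≤ t ^ 4 := by nlinarith [pow_nonneg h0 4]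
    have h5 : t ^ 4 ≤ 16 * sin t ^ 4 := by
      have h6 := mul_le_sin h0 (by linarith)
      have h7 : t ≤ 2 * sin t := by
        have : 1 / 2 * t ≤ 2 / π * t := by
          apply mul_le_mul_of_nonneg_right _ h0
          rw [div_le_div_iff₀ (by norm_num) pi_pos]; linarith [pi_le_four]
        linarith
      calc t ^ 4 ≤ (2 * sin t) ^ 4 := by gcongr
        _ = _ := by ring
    have h8 : |f t + f (-t) - 2 * c0 - 2 * c2 * sin t ^ 2| ≤ (|C| + 2 * |c2|) * t ^ 4 := by
      have e : f t + f (-t) - 2 * c0 - 2 * c2 * sin t ^ 2 =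
        (f t + f (-t) - 2 * c0 - 2 * c2 * t ^ 2) + 2 * c2 * (t ^ 2 - sin t ^ 2) := by ring
      rw [e]
      refine (abs_add_le _ _).trans ?_
      rw [abs_mul, abs_mul, abs_two]
      have : C * t ^ 4 ≤ |C| * t ^ 4 := by gcongr; exact le_abs_self C
      have : 2 * |c2| * |t ^ 2 - sin t ^ 2| ≤ 2 * |c2| * t ^ 4 := by gcongr
      linarith
    have h9 : (|C| + 2 * |c2|) * t ^ 4 ≤ 16 * (|C| + 2 * |c2|) * sin t ^ 4 / cos t := by
      rw [le_div_iff₀ hc]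
      calc (|C| + 2 * |c2|) * t ^ 4 * cos t ≤ (|C| + 2 * |c2|) * (16 * sin t ^ 4) * 1 := by gcongr
        _ = _ := by ring
    have : 0 ≤ (2 * K + 2 * |c0| + 2 * |c2|) / sin d ^ 4 * sin t ^ 4 / cos t := by positivity
    linarith
  · have hsdt : sin d ≤ sin t := sin_le_sin_of_le_of_le_pi_div_two (by linarith) h1.le htd
    have a1 := hK t (by linarith) h1
    have a2 := hK (-t) (by linarith) (by linarith)
    rw [cos_neg] at a2
    have a3 : |f t + f (-t) - 2 * c0 - 2 * c2 * sin t ^ 2| ≤ (2 * K + 2 * |c0| + 2 * |c2|) / cos t := by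
      have b1 : |2 * c0| ≤ 2 * |c0| / cos t := by
        rw [abs_mul, abs_two, le_div_iff₀ hc]
        exact mul_le_of_le_one_right (by positivity) hc1
      have b2 : |2 * c2 * sin t ^ 2| ≤ 2 * |c2| / cos t := by
        rw [abs_mul, abs_mul, abs_two, abs_of_nonneg (sq_nonneg (sin t)), le_div_iff₀ hc, mul_assoc]
        exact mul_le_of_le_one_right (by positivity) (mul_le_one₀ (by nlinarith) hc.le hc1)
      have : (2 * K + 2 * |c0| + 2 * |c2|) / cos t = K / cos t + K / cos t + 2 * |c0| / cos t + 2 * |c2| / cos t := by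
        ring
      rw [this]
      calc |f t + f (-t) - 2 * c0 - 2 * c2 * sin t ^ 2|
          ≤ |f t + f (-t) - 2 * c0| + |2 * c2 * sin t ^ 2| := abs_sub _ _
        _ ≤ |f t + f (-t)| + |2 * c0| + |2 * c2 * sin t ^ 2| := by gcongr; exact abs_sub _ _
        _ ≤ |f t| + |f (-t)| + |2 * c0| + |2 * c2 * sin t ^ 2| := by gcongr; exact abs_add_le _ _
        _ ≤ _ := by gcongr
    have a4 : (2 * K + 2 * |c0| + 2 * |c2|) / cos t ≤
        (2 * K + 2 * |c0| + 2 * |c2|) / sin d ^ 4 * sin t ^ 4 / cos t := by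
      gcongr
      rw [div_mul_eq_mul_div, le_div_iff₀ (by positivity)]
      gcongr
    have : 0 ≤ 16 * (|C| + 2 * |c2|) * sin t ^ 4 / cos t := by positivity
    linarith

lemma cos_int (n : ℕ) : ∫ t in (-(π / 2))..(π / 2), cos t ^ n = Iw n := by
  have := intervalIntegral.integral_comp_add_right (a := -(π / 2)) (b := π / 2)
    (fun θ => sin θ ^ n) (π / 2)
  rw [show -(π / 2) + π / 2 = 0 by ring, show π / 2 + π / 2 = π by ring] at this
  unfold Iw
  rw [← this]
  simp only [sin_add_pi_div_two]

lemma laplace (f : ℝ → ℝ) (c0 c2 K s : ℝ) (hs : 0 ≤ s) (hm : Measurable f)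
    (hK : ∀ t, -(π / 2) < t → t < π / 2 → |f t| ≤ K / cos t)
    (h : (fun t : ℝ => f t + f (-t) - 2 * c0 - 2 * c2 * t ^ 2) =O[𝓝 0] fun t => t ^ 4) :
    ∃ C, 0 ≤ C ∧ ∀ n : ℕ, 1 ≤ n →
      IntervalIntegrable (fun t => cos t ^ n * f t) volume (-(π / 2)) (π / 2) ∧
      |(∫ t in (-(π / 2))..(π / 2), cos t ^ n * f t) - Iw n * (c0 + c2 / (n + s))| ≤ C * Iw n / (n : ℝ) ^ 2 := by
  obtain ⟨M, hM0, hM⟩ := trig_bd f c0 c2 K hK h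
  have hKnn : 0 ≤ K := by
    have := hK 0 (by linarith [pi_pos]) (by linarith [pi_pos])
    simp at this
    exact (abs_nonneg _).trans this
  have hpp := pi_pos
  refine ⟨3 * M + |c2| * |s - 2|, by positivity, fun n hn => ?_⟩
  obtain ⟨m, rfl⟩ : ∃ m, n = m + 1 := ⟨n - 1, by omega⟩
  have hgen : ∀ g : ℝ → ℝ, Measurable g → (∀ t, -(π / 2) < t → t < π / 2 → |g t| ≤ K / cos t) →
      IntervalIntegrable (fun t => cos t ^ (m + 1) * g t) volume (-(π / 2)) (π / 2) := by
    intro g hgm hgK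
    rw [intervalIntegrable_iff_integrableOn_Ioo_of_le (by linarith)]
    refine Measure.integrableOn_of_bounded (M := K) (by simp) (by fun_prop) ?_
    refine (ae_restrict_iff' measurableSet_Ioo).2 (Eventually.of_forall fun t ht => ?_)
    have hc : 0 < cos t := cos_pos_of_mem_Ioo ht
    rw [norm_mul, norm_pow, norm_eq_abs, norm_eq_abs, abs_of_pos hc]
    calc cos t ^ (m + 1) * |g t| ≤ cos t ^ (m + 1) * (K / cos t) := by
          gcongr; exact hgK t ht.1 ht.2
      _ = cos t ^ m * K := by rw [pow_succ]; field_simp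
      _ ≤ 1 * K := by gcongr; exact pow_le_one₀ hc.le (cos_le_one t)
      _ = K := one_mul K
  have hintg := hgen f hm hK
  refine ⟨hintg, ?_⟩
  have hintg' : IntervalIntegrable (fun t => cos t ^ (m + 1) * f (-t)) volume (-(π / 2)) (π / 2) :=
    hgen (fun t => f (-t)) (by fun_prop) (fun t h1 h2 => by
      have := hK (-t) (by linarith) (by linarith)
      rwa [cos_neg] at this)
  have hflip : ∫ t in (-(π / 2))..(π / 2), cos t ^ (m + 1) * f (-t) =
      ∫ t in (-(π / 2))..(π / 2), cos t ^ (m + 1) * f t := by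
    have := intervalIntegral.integral_comp_neg (a := -(π / 2)) (b := π / 2) (fun t => cos t ^ (m + 1) * f t)
    simpa using this
  set J := ∫ t in (-(π / 2))..(π / 2), cos t ^ (m + 1) * f t with hJ
  have ii : ∀ k, IntervalIntegrable (fun t => cos t ^ k) volume (-(π / 2)) (π / 2) := fun k =>
    (by fun_prop : Continuous fun t : ℝ => cos t ^ k).intervalIntegrable _ _
  have i2 : ∫ t in (-(π / 2))..(π / 2), cos t ^ (m + 1) * sin t ^ 2 = Iw (m + 1) - Iw (m + 3) := by
    rw [← cos_int, ← cos_int, ← intervalIntegral.integral_sub (ii _) (ii _)]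
    refine intervalIntegral.integral_congr fun t _ => ?_
    simp only [sin_sq]; ring
  have i4 : ∫ t in (-(π / 2))..(π / 2), cos t ^ m * sin t ^ 4 = Iw m - 2 * Iw (m + 2) + Iw (m + 4) := by
    rw [← cos_int, ← cos_int, ← cos_int, ← intervalIntegral.integral_const_mul,
      ← intervalIntegral.integral_sub (ii _) ((ii _).const_mul _),
      ← intervalIntegral.integral_add ((ii _).sub ((ii _).const_mul _)) (ii _)]
    refine intervalIntegral.integral_congr fun t _ => ?_
    simp only [show sin t ^ 4 = (sin t ^ 2) ^ 2 by ring, sin_sq]; ring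
  have hE : ∫ t in (-(π / 2))..(π / 2), cos t ^ (m + 1) * (f t + f (-t) - 2 * c0 - 2 * c2 * sin t ^ 2) =
      2 * J - 2 * c0 * Iw (m + 1) - 2 * c2 * (Iw (m + 1) - Iw (m + 3)) := by
    have ic : IntervalIntegrable (fun t => cos t ^ (m + 1) * sin t ^ 2) volume (-(π / 2)) (π / 2) :=
      (by fun_prop : Continuous fun t : ℝ => cos t ^ (m + 1) * sin t ^ 2).intervalIntegrable _ _
    rw [← i2, ← cos_int, two_mul J]
    nth_rewrite 2 [← hflip]
    rw [hJ, ← intervalIntegral.integral_const_mul (2 * c0), ← intervalIntegral.integral_const_mul (2 * c2),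
      ← intervalIntegral.integral_add hintg hintg', ← intervalIntegral.integral_sub (hintg.add hintg') ((ii _).const_mul _),
      ← intervalIntegral.integral_sub ((hintg.add hintg').sub ((ii _).const_mul _)) (ic.const_mul _)]
    refine intervalIntegral.integral_congr fun t _ => ?_
    ring
  have hbd : |2 * J - 2 * c0 * Iw (m + 1) - 2 * c2 * (Iw (m + 1) - Iw (m + 3))| ≤
      M * (Iw m - 2 * Iw (m + 2) + Iw (m + 4)) := by
    rw [← hE, ← i4, ← intervalIntegral.integral_const_mul, ← norm_eq_abs]
    refine intervalIntegral.norm_integral_le_of_norm_le (by linarith) (Eventually.of_forall fun t ht => ?_)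
      ((by fun_prop : Continuous fun t : ℝ => M * (cos t ^ m * sin t ^ 4)).intervalIntegrable _ _)
    rcases eq_or_lt_of_le ht.2 with h1 | h1
    · subst h1
      simp only [cos_pi_div_two, sin_pi_div_two]
      simp
      positivity
    · have hc : 0 < cos t := cos_pos_of_mem_Ioo ⟨ht.1, h1⟩
      rw [norm_mul, norm_pow, norm_eq_abs, norm_eq_abs, abs_of_pos hc]
      calc cos t ^ (m + 1) * _ ≤ cos t ^ (m + 1) * (M * sin t ^ 4 / cos t) := by
            gcongr; exact hM t ht.1 h1
        _ = _ := by rw [pow_succ]; field_simp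
  have r1 := Iw_succ2 m
  have r2 := Iw_succ2 (m + 1)
  have r3 := Iw_succ2 (m + 2)
  have hI0 := Iw_pos m
  have hI1 := Iw_pos (m + 1)
  have hle := Iw_le (m + 1)
  have hm0 : (0 : ℝ) ≤ m := by positivity
  push_cast at r2 r3
  have s1 : Iw m - 2 * Iw (m + 2) + Iw (m + 4) = Iw m * (3 / ((m + 2) * (m + 4))) := by
    rw [show m + 4 = m + 2 + 2 by ring, r3, r1]
    field_simp; ring
  have s2 : Iw (m + 1) - Iw (m + 3) = Iw (m + 1) / (m + 3) := by
    rw [show m + 3 = m + 1 + 2 by ring, r2]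
    field_simp; ring
  have s3 : Iw m ≤ 2 * Iw (m + 1) := by
    have : Iw m / 2 ≤ Iw (m + 2) := by
      rw [r1, div_eq_inv_mul]
      apply mul_le_mul_of_nonneg_right _ hI0.le
      rw [le_div_iff₀ (by positivity)]; linarith
    have h' : Iw (m + 2) ≤ Iw (m + 1) := hle
    linarith
  rw [s1, s2] at hbd
  push_cast
  have t1 : Iw m * (3 / (((m : ℝ) + 2) * (m + 4))) ≤ 6 * Iw (m + 1) / ((m : ℝ) + 1) ^ 2 := by
    calc Iw m * (3 / (((m : ℝ) + 2) * (m + 4))) ≤ 2 * Iw (m + 1) * (3 / (((m : ℝ) + 1) ^ 2)) := by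
          gcongr; nlinarith
      _ = _ := by ring
  have t2 : |1 / ((m : ℝ) + 3) - 1 / (m + 1 + s)| ≤ |s - 2| / ((m : ℝ) + 1) ^ 2 := by
    have : 1 / ((m : ℝ) + 3) - 1 / (m + 1 + s) = (s - 2) / ((m + 3) * (m + 1 + s)) := by
      field_simp; ring
    rw [this, abs_div]
    gcongr
    rw [abs_of_pos (by positivity)]
    nlinarith
  have e : J - Iw (m + 1) * (c0 + c2 / (m + 1 + s)) =
     (2 * J - 2 * c0 * Iw (m + 1) - 2 * c2 * (Iw (m + 1) / (m + 3))) / 2 +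
      c2 * Iw (m + 1) * (1 / ((m : ℝ) + 3) - 1 / (m + 1 + s)) := by ring
  rw [e]
  refine (abs_add_le _ _).trans ?_
  rw [abs_div, abs_two, abs_mul, abs_mul, abs_of_pos hI1]
  have t3 : M * (Iw m * (3 / (((m : ℝ) + 2) * (m + 4)))) ≤ M * (6 * Iw (m + 1) / ((m : ℝ) + 1) ^ 2) := by gcongr
  have t4 : |c2| * Iw (m + 1) * |1 / ((m : ℝ) + 3) - 1 / (m + 1 + s)| ≤ |c2| * Iw (m + 1) * (|s - 2| / ((m : ℝ) + 1) ^ 2) := by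
    gcongr
  have e2 : (3 * M + |c2| * |s - 2|) * Iw (m + 1) / ((m : ℝ) + 1) ^ 2 =
    M * (6 * Iw (m + 1) / ((m : ℝ) + 1) ^ 2) / 2 + |c2| * Iw (m + 1) * (|s - 2| / ((m : ℝ) + 1) ^ 2) := by ring
  rw [e2]
  linarith
end

section
open Filter Topology Asymptotics

lemma qsc_pos {t : ℝ} (h1 : -(π / 2) < t) (h2 : t < π / 2) :
    0 < sin (π / 4 + t / 2) ∧ 0 < cos (π / 4 + t / 2) :=
  ⟨sin_pos_of_pos_of_lt_pi (by linarith) (by linarith), cos_pos_of_mem_Ioo ⟨by linarith, by linarith⟩⟩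

lemma rho_bd (γ η : ℝ) (hγ : -1 < γ) (hη : -1 < η) {t : ℝ} (h1 : -(π / 2) < t) (h2 : t < π / 2) :
    |rho γ η t| ≤ (2 ^ (γ + 1) * 2 ^ (η + 1) / 2) / cos t := by
  obtain ⟨hs, hc⟩ := qsc_pos h1 h2
  have hcos : cos t = 2 * sin (π / 4 + t / 2) * cos (π / 4 + t / 2) := by
    rw [← sin_two_mul, ← sin_add_pi_div_two]; congr 1; ring
  have key : ∀ x γ : ℝ, 0 < x → x ≤ 1 → -1 < γ → (2 * x) ^ γ ≤ 2 ^ (γ + 1) / (2 * x) := by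
    intro x γ hx hx1 hγ
    rw [le_div_iff₀ (by positivity)]
    nth_rewrite 2 [← rpow_one (2 * x)]
    rw [← rpow_add (by positivity)]
    exact rpow_le_rpow (by positivity) (by linarith) (by linarith)
  unfold rho
  rw [abs_of_pos (by positivity), hcos]
  calc _ ≤ 2 ^ (γ + 1) / (2 * cos (π / 4 + t / 2)) * (2 ^ (η + 1) / (2 * sin (π / 4 + t / 2))) := by
        gcongr
        · exact key _ _ hc (cos_le_one _) hγ
        · exact key _ _ hs (sin_le_one _) hη
    _ = _ := by field_simp

noncomputable def ell (γ η t : ℝ) : ℝ :=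
  η / 2 * (cos (π / 4 + t / 2) / sin (π / 4 + t / 2)) - γ / 2 * (sin (π / 4 + t / 2) / cos (π / 4 + t / 2))

lemma hd_qs (t : ℝ) : HasDerivAt (fun t : ℝ => sin (π / 4 + t / 2)) (cos (π / 4 + t / 2) * (1 / 2)) t :=
  (((hasDerivAt_id' t).div_const 2).const_add (π / 4)).sin

lemma hd_qc (t : ℝ) : HasDerivAt (fun t : ℝ => cos (π / 4 + t / 2)) (-sin (π / 4 + t / 2) * (1 / 2)) t :=
  (((hasDerivAt_id' t).div_const 2).const_add (π / 4)).cos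

lemma hd_rho (γ η : ℝ) {t : ℝ} (h1 : -(π / 2) < t) (h2 : t < π / 2) :
    HasDerivAt (rho γ η) (rho γ η t * ell γ η t) t := by
  obtain ⟨hs, hc⟩ := qsc_pos h1 h2
  have d1 := ((hd_qc t).const_mul 2).rpow_const (p := γ) (Or.inl (by positivity))
  have d2 := ((hd_qs t).const_mul 2).rpow_const (p := η) (Or.inl (by positivity))
  refine (d1.mul d2).congr_deriv ?_
  unfold rho ell
  rw [rpow_sub_one (by positivity), rpow_sub_one (by positivity)]
  field_simp
  ring

lemma hd_ell (γ η : ℝ) : HasDerivAt (ell γ η) (-(γ + η) / 2) 0 := by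
  have hp := pi_pos
  obtain ⟨hs, hc⟩ := qsc_pos (t := 0) (by linarith) (by linarith)
  have d := (((hd_qc 0).div (hd_qs 0) hs.ne').const_mul (η / 2)).sub (((hd_qs 0).div (hd_qc 0) hc.ne').const_mul (γ / 2))
  refine d.congr_deriv ?_
  simp only [zero_div, add_zero, cos_pi_div_four, sin_pi_div_four]
  have : (√2 : ℝ) ^ 2 = 2 := sq_sqrt (by norm_num)
  field_simp
  ring

lemma ell_zero (γ η : ℝ) : ell γ η 0 = (η - γ) / 2 := by
  unfold ell
  simp only [zero_div, add_zero, cos_pi_div_four, sin_pi_div_four]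
  field_simp

lemma rho_zero (γ η : ℝ) : rho γ η 0 = 2 ^ ((γ + η) / 2) := by
  unfold rho
  simp only [zero_div, add_zero, cos_pi_div_four, sin_pi_div_four]
  rw [show 2 * (√2 / 2) = √2 by ring, sqrt_eq_rpow, ← rpow_mul (by norm_num), ← rpow_mul (by norm_num),
    ← rpow_add (by norm_num)]
  congr 1; ring

lemma rho_analytic (γ η : ℝ) : AnalyticAt ℝ (rho γ η) 0 := by
  have hp := pi_pos
  obtain ⟨hs, hc⟩ := qsc_pos (t := 0) (by linarith) (by linarith)
  have key : ∀ (p : ℝ) (g : ℝ → ℝ), AnalyticAt ℝ g 0 → 0 < g 0 → AnalyticAt ℝ (fun t => g t ^ p) 0 := by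
    intro p g hg h0
    have h1 : AnalyticAt ℝ (fun t => exp (log (g t) * p)) 0 := by
      have := hg.log h0
      fun_prop
    refine h1.congr ?_
    filter_upwards [hg.continuousAt.eventually (lt_mem_nhds h0)] with t ht
    rw [rpow_def_of_pos ht]
  unfold rho
  refine (key γ (fun t => 2 * cos (π / 4 + t / 2)) (by fun_prop) (by positivity)).mul
    (key η (fun t => 2 * sin (π / 4 + t / 2)) (by fun_prop) (by positivity))

lemma rho_meas (γ η : ℝ) : Measurable (rho γ η) := by
  unfold rho; fun_prop

/-- second derivative at the origin of the amplitude -/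
lemma iter2 (γ η σ a b : ℝ) :
    iteratedDeriv 2 (fun t => rho γ η t * (a * cos (σ * t) + b * sin (σ * t))) 0 =
      2 ^ ((γ + η) / 2) * (a * (((η - γ) / 2) ^ 2 - (γ + η) / 2 - σ ^ 2) + b * ((η - γ) * σ)) := by
  have hp := pi_pos
  have hd : ∀ t, HasDerivAt (fun t => a * cos (σ * t) + b * sin (σ * t)) (σ * (b * cos (σ * t) - a * sin (σ * t))) t := by
    intro t
    have d := ((((hasDerivAt_id' t).const_mul σ).cos).const_mul a).add ((((hasDerivAt_id' t).const_mul σ).sin).const_mul b)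
    refine d.congr_deriv (by ring)
  have hd2 : ∀ t, HasDerivAt (fun t => σ * (b * cos (σ * t) - a * sin (σ * t))) (σ * (-b * σ * sin (σ * t) - a * σ * cos (σ * t))) t := by
    intro t
    have d := (((((hasDerivAt_id' t).const_mul σ).cos).const_mul b).sub ((((hasDerivAt_id' t).const_mul σ).sin).const_mul a)).const_mul σ
    refine d.congr_deriv (by ring)
  have h1 : deriv (fun t => rho γ η t * (a * cos (σ * t) + b * sin (σ * t))) =ᶠ[𝓝 0]
      fun t => rho γ η t * ell γ η t * (a * cos (σ * t) + b * sin (σ * t)) +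
        rho γ η t * (σ * (b * cos (σ * t) - a * sin (σ * t))) := by
    filter_upwards [Ioo_mem_nhds (show -(π / 2) < 0 by linarith) (show 0 < π / 2 by linarith)] with t ht
    exact ((hd_rho γ η ht.1 ht.2).mul (hd t)).deriv
  rw [iteratedDeriv_succ, iteratedDeriv_one, h1.deriv_eq]
  have hr := hd_rho γ η (t := 0) (by linarith) (by linarith)
  have d := ((hr.mul (hd_ell γ η)).mul (hd 0)).add (hr.mul (hd2 0))
  refine d.deriv.trans ?_
  simp only [mul_zero, cos_zero, sin_zero, rho_zero, ell_zero, Pi.mul_apply]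
  ring

lemma amp_laplace (γ η a b : ℝ) (hγ : -1 < γ) (hη : -1 < η) (hab : |a| + |b| ≤ 1) (s : ℝ) (hs : 0 ≤ s) :
    ∃ C, 0 ≤ C ∧ ∀ n : ℕ, 1 ≤ n →
      IntervalIntegrable (fun t => cos t ^ n * (rho γ η t * (a * cos ((γ + η) / 2 * t) + b * sin ((γ + η) / 2 * t)))) volume (-(π / 2)) (π / 2) ∧
      |(∫ t in (-(π / 2))..(π / 2), cos t ^ n * (rho γ η t * (a * cos ((γ + η) / 2 * t) + b * sin ((γ + η) / 2 * t)))) -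
        Iw n * (2 ^ ((γ + η) / 2) * a + (2 ^ ((γ + η) / 2) * (-a * (γ * η / 2 + (γ + η) / 4) + b * ((η ^ 2 - γ ^ 2) / 4))) / (n + s))|
        ≤ C * Iw n / (n : ℝ) ^ 2 := by
  refine laplace (fun t => rho γ η t * (a * cos ((γ + η) / 2 * t) + b * sin ((γ + η) / 2 * t))) _ _
    (2 ^ (γ + 1) * 2 ^ (η + 1) / 2) s hs (by have := rho_meas γ η; fun_prop) ?_ ?_
  · intro t h1 h2
    rw [abs_mul]
    refine (mul_le_of_le_one_right (abs_nonneg _) ?_).trans (rho_bd γ η hγ hη h1 h2)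
    refine (abs_add_le _ _).trans ?_
    rw [abs_mul, abs_mul]
    refine le_trans ?_ hab
    exact add_le_add (mul_le_of_le_one_right (abs_nonneg _) (abs_cos_le_one _))
      (mul_le_of_le_one_right (abs_nonneg _) (abs_sin_le_one _))
  · apply even_taylor
    · have := rho_analytic γ η
      fun_prop
    · simp [rho_zero]
    · rw [iter2]; ring

/-- phase -/
noncomputable def chi (γ η : ℝ) (n : ℕ) : ℝ := n * π / 2 + (η - γ) * π / 4

lemma jacobiP_zero_asymp (γ η : ℝ) (hγ : -1 < γ) (hη : -1 < η) (s : ℝ) (hs : 0 ≤ s) :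
    ∃ C, 0 ≤ C ∧ ∀ n : ℕ, 1 ≤ n →
      |jacobiP γ η n 0 - π⁻¹ * Iw n * 2 ^ ((γ + η) / 2) *
        (cos (chi γ η n) * (1 - (γ * η / 2 + (γ + η) / 4) / (n + s)) +
          sin (chi γ η n) * ((η ^ 2 - γ ^ 2) / 4 / (n + s)))| ≤ C * Iw n / (n : ℝ) ^ 2 := by
  obtain ⟨C1, hC1, H1⟩ := amp_laplace γ η 1 0 hγ hη (by simp) s hs
  obtain ⟨C2, hC2, H2⟩ := amp_laplace γ η 0 1 hγ hη (by simp) s hs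
  have hp := pi_pos
  refine ⟨π⁻¹ * (C1 + C2), by positivity, fun n hn => ?_⟩
  obtain ⟨i1, b1⟩ := H1 n hn
  obtain ⟨i2, b2⟩ := H2 n hn
  rw [jacobiP_zero_int γ η hγ hη n hn]
  have e : ∫ t in (-(π / 2))..(π / 2), cos t ^ n * (rho γ η t *
      cos ((γ + η) / 2 * t - (n * π / 2 + (η - γ) * π / 4))) =
      cos (chi γ η n) * (∫ t in (-(π / 2))..(π / 2), cos t ^ n * (rho γ η t * (1 * cos ((γ + η) / 2 * t) + 0 * sin ((γ + η) / 2 * t)))) +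
      sin (chi γ η n) * (∫ t in (-(π / 2))..(π / 2), cos t ^ n * (rho γ η t * (0 * cos ((γ + η) / 2 * t) + 1 * sin ((γ + η) / 2 * t)))) := by
    rw [← intervalIntegral.integral_const_mul, ← intervalIntegral.integral_const_mul,
      ← intervalIntegral.integral_add (i1.const_mul _) (i2.const_mul _)]
    refine intervalIntegral.integral_congr fun t _ => ?_
    simp only [cos_sub, chi]
    ring
  rw [e]
  set J1 := ∫ t in (-(π / 2))..(π / 2), cos t ^ n * (rho γ η t * (1 * cos ((γ + η) / 2 * t) + 0 * sin ((γ + η) / 2 * t)))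
  set J2 := ∫ t in (-(π / 2))..(π / 2), cos t ^ n * (rho γ η t * (0 * cos ((γ + η) / 2 * t) + 1 * sin ((γ + η) / 2 * t)))
  set E1 := J1 - Iw n * (2 ^ ((γ + η) / 2) * 1 + (2 ^ ((γ + η) / 2) * (-1 * (γ * η / 2 + (γ + η) / 4) + 0 * ((η ^ 2 - γ ^ 2) / 4))) / (n + s)) with hE1
  set E2 := J2 - Iw n * (2 ^ ((γ + η) / 2) * 0 + (2 ^ ((γ + η) / 2) * (-0 * (γ * η / 2 + (γ + η) / 4) + 1 * ((η ^ 2 - γ ^ 2) / 4))) / (n + s)) with hE2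
  have e2 : π⁻¹ * (cos (chi γ η n) * J1 + sin (chi γ η n) * J2) - π⁻¹ * Iw n * 2 ^ ((γ + η) / 2) *
        (cos (chi γ η n) * (1 - (γ * η / 2 + (γ + η) / 4) / (n + s)) +
          sin (chi γ η n) * ((η ^ 2 - γ ^ 2) / 4 / (n + s))) =
     π⁻¹ * (cos (chi γ η n) * E1 + sin (chi γ η n) * E2) := by
    rw [hE1, hE2]; ring
  rw [e2, abs_mul, abs_of_pos (by positivity : 0 < π⁻¹)]
  have : |cos (chi γ η n) * E1 + sin (chi γ η n) * E2| ≤ C1 * Iw n / (n : ℝ) ^ 2 + C2 * Iw n / (n : ℝ) ^ 2 := by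
    refine (abs_add_le _ _).trans (add_le_add ?_ ?_)
    · rw [abs_mul]
      exact (mul_le_of_le_one_left (abs_nonneg _) (abs_cos_le_one _)).trans b1
    · rw [abs_mul]
      exact (mul_le_of_le_one_left (abs_nonneg _) (abs_sin_le_one _)).trans b2
  calc _ ≤ π⁻¹ * (C1 * Iw n / (n : ℝ) ^ 2 + C2 * Iw n / (n : ℝ) ^ 2) := by gcongr
    _ = _ := by ring
end

section
open Filter Topology Asymptotics

/-- normalising constant -/
noncomputable def cn (γ η : ℝ) (n : ℕ) : ℝ := Rn γ η n * √π * Nn γ η n ^ (-(η - 1 / 2))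

lemma jw_mid (γ η : ℝ) : jw γ η (π / 2) = 2 ^ (-((γ + η + 1) / 2)) := by
  unfold jw
  rw [show π / 2 / 2 = π / 4 by ring, sin_pi_div_four, cos_pi_div_four]
  have : √2 / 2 = (2 : ℝ) ^ (-(1 / 2 : ℝ)) := by
    rw [rpow_neg (by norm_num), ← sqrt_eq_rpow]
    have : (√2 : ℝ) ^ 2 = 2 := sq_sqrt (by norm_num)
    field_simp
    linarith
  rw [this, ← rpow_mul (by norm_num), ← rpow_mul (by norm_num), ← rpow_add (by norm_num)]
  congr 1; ring

lemma cn_ju_mid (γ η : ℝ) (n : ℕ) :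
    cn γ η n * ju γ η n (π / 2) = π * (2 ^ ((γ + η) / 2))⁻¹ * (jacobiP γ η n 0 / Iw n) * Qn γ η n := by
  have hI := Iw_pos n
  have e : jw γ η (π / 2) = (2 ^ ((γ + η) / 2))⁻¹ * (√2)⁻¹ := by
    rw [jw_mid, sqrt_eq_rpow, ← rpow_neg (by norm_num), ← rpow_neg (by norm_num), ← rpow_add (by norm_num)]
    congr 1; ring
  unfold cn ju Qn
  rw [e, cos_pi_div_two, sqrt_mul (by norm_num)]
  have hp := pi_pos
  have h2 : √π * √π = π := mul_self_sqrt hp.le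
  have h3 : 0 < √π := sqrt_pos.2 hp
  have h4 : 0 < (2 : ℝ) ^ ((γ + η) / 2) := by positivity
  nth_rewrite 2 [← h2]
  field_simp

lemma mid_asymp (γ η : ℝ) (hγ : -(1 / 2) < γ) (hη : 0 < η) :
    ∃ D, 0 ≤ D ∧ ∀ n : ℕ, 1 ≤ n →
      |cn γ η n * ju γ η n (π / 2) - (cos (chi γ η n) + (η ^ 2 - γ ^ 2) / 4 / Nn γ η n * sin (chi γ η n))| ≤ D / (n : ℝ) ^ 2 := by
  obtain ⟨D1, hD1, H1⟩ := jacobiP_zero_asymp γ η (by linarith) (by linarith) ((γ + η + 1) / 2) (by linarith)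
  obtain ⟨D2, hD2, H2⟩ := bound_of_isBigO_nat_atTop (Qn_asymp γ η hγ hη)
  set κ := γ * η / 2 + (γ + η) / 4 with hκ
  set h := (η ^ 2 - γ ^ 2) / 4 with hh
  have hp := pi_pos
  set a := (2 : ℝ) ^ ((γ + η) / 2) with ha
  have ha0 : 0 < a := by positivity
  refine ⟨π * a⁻¹ * D1 * (1 + |κ| + D2) + (1 + |κ| + |h|) * D2 + (κ ^ 2 + |h| * |κ|), by positivity, fun n hn => ?_⟩
  have hn1 : (1 : ℝ) ≤ n := by exact_mod_cast hn
  have hI := Iw_pos n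
  have hN : (n : ℝ) ≤ Nn γ η n := by unfold Nn; linarith
  have hN0 : 0 < Nn γ η n := by linarith
  rw [cn_ju_mid γ η n]
  have h1 := H1 n hn
  have h2 := H2 (x := n) (by positivity)
  rw [norm_eq_abs, norm_of_nonneg (by positivity)] at h2
  change |jacobiP γ η n 0 - π⁻¹ * Iw n * a * (cos (chi γ η n) * (1 - κ / Nn γ η n) + sin (chi γ η n) * (h / Nn γ η n))| ≤ _ at h1
  set N := Nn γ η n with hNdef
  set X := π * a⁻¹ * (jacobiP γ η n 0 / Iw n) with hX
  set Q := Qn γ η n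
  set c := cos (chi γ η n)
  set s := sin (chi γ η n)
  have hc : |c| ≤ 1 := abs_cos_le_one _
  have hs : |s| ≤ 1 := abs_sin_le_one _
  set x0 := c * (1 - κ / N) + s * (h / N) with hx0
  have b1 : |X - x0| ≤ π * a⁻¹ * D1 / (n : ℝ) ^ 2 := by
    have : X - x0 = π * a⁻¹ * (Iw n)⁻¹ * (jacobiP γ η n 0 - π⁻¹ * Iw n * a * x0) := by
      rw [hX]; field_simp
    rw [this, abs_mul, abs_of_pos (by positivity : 0 < π * a⁻¹ * (Iw n)⁻¹)]
    calc _ ≤ π * a⁻¹ * (Iw n)⁻¹ * (D1 * Iw n / (n : ℝ) ^ 2) := by gcongr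
      _ = _ := by field_simp
  have b2 : |Q - (1 + κ * N⁻¹)| ≤ D2 / (n : ℝ) ^ 2 := by
    rw [div_eq_mul_inv]
    convert h2 using 2; ring
  have hNi : N⁻¹ ≤ 1 := inv_le_one_of_one_le₀ (by linarith)
  have hNi0 : 0 < N⁻¹ := by positivity
  have hni2 : 1 / (n : ℝ) ^ 2 ≤ 1 := by
    rw [div_le_one (by positivity)]; nlinarith
  have b3 : |Q| ≤ 1 + |κ| + D2 := by
    have e : Q = (Q - (1 + κ * N⁻¹)) + (1 + κ * N⁻¹) := by ring
    rw [e]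
    refine (abs_add_le _ _).trans ?_
    have : D2 / (n : ℝ) ^ 2 ≤ D2 := by
      rw [div_eq_mul_one_div]; exact mul_le_of_le_one_right hD2.le hni2
    have : |1 + κ * N⁻¹| ≤ 1 + |κ| := by
      refine (abs_add_le _ _).trans ?_
      rw [abs_one, abs_mul, abs_of_pos hNi0]
      gcongr
      exact mul_le_of_le_one_right (abs_nonneg _) hNi
    linarith
  have b4 : |x0| ≤ 1 + |κ| + |h| := by
    have e : x0 = c + -(c * (κ * N⁻¹)) + s * (h * N⁻¹) := by rw [hx0]; ring
    rw [e]
    refine (abs_add_three _ _ _).trans ?_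
    rw [abs_neg, abs_mul, abs_mul, abs_mul, abs_mul, abs_of_pos hNi0]
    gcongr
    · calc |c| * (|κ| * N⁻¹) ≤ 1 * (|κ| * 1) := by gcongr
        _ = _ := by ring
    · calc |s| * (|h| * N⁻¹) ≤ 1 * (|h| * 1) := by gcongr
        _ = _ := by ring
  have b5 : |x0 * (1 + κ * N⁻¹) - (c + h / N * s)| ≤ (κ ^ 2 + |h| * |κ|) / (n : ℝ) ^ 2 := by
    have e : x0 * (1 + κ * N⁻¹) - (c + h / N * s) = (-(c * κ ^ 2) + s * h * κ) / N ^ 2 := by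
      rw [hx0]; field_simp; ring
    rw [e, abs_div, abs_of_pos (by positivity : 0 < N ^ 2)]
    gcongr
    refine (abs_add_le _ _).trans ?_
    rw [abs_neg, abs_mul, abs_mul, abs_mul, abs_of_nonneg (sq_nonneg κ)]
    gcongr
    · exact mul_le_of_le_one_left (sq_nonneg _) hc
    · exact mul_le_of_le_one_left (abs_nonneg _) hs
  have e : X * Q - (c + h / N * s) = (X - x0) * Q + x0 * (Q - (1 + κ * N⁻¹)) + (x0 * (1 + κ * N⁻¹) - (c + h / N * s)) := by ring
  rw [e]
  refine (abs_add_three _ _ _).trans ?_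
  rw [abs_mul, abs_mul]
  calc _ ≤ π * a⁻¹ * D1 / (n : ℝ) ^ 2 * (1 + |κ| + D2) + (1 + |κ| + |h|) * (D2 / (n : ℝ) ^ 2) + (κ ^ 2 + |h| * |κ|) / (n : ℝ) ^ 2 := by
        gcongr
    _ = _ := by ring

lemma Rn_shift (γ η : ℝ) (hγ : -(1 / 2) < γ) (hη : 0 < η) (m : ℕ) :
    ((m : ℝ) + 1 + γ + η + 1) * Rn γ η (m + 1) = Rn (γ + 1) (η + 1) m := by
  have hm : (0 : ℝ) ≤ m := by positivity
  unfold Rn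
  push_cast
  rw [Gs (x := (m : ℝ) + 1 + γ + η + 1) (y := (m : ℝ) + (γ + 1) + (η + 1) + 1) (by linarith) (by ring),
    show (m : ℝ) + (γ + 1) + 1 = m + 1 + γ + 1 by ring]
  ring

lemma cn_shift (γ η : ℝ) (hγ : -(1 / 2) < γ) (hη : 0 < η) (m : ℕ) :
    cn γ η (m + 1) * ((m : ℝ) + 1 + γ + η + 1) = Nn γ η (m + 1) * cn (γ + 1) (η + 1) m := by
  have hN : Nn (γ + 1) (η + 1) m = Nn γ η (m + 1) := by
    unfold Nn; push_cast; ring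
  have hN0 := Nn_pos γ η hγ hη (m + 1)
  unfold cn
  rw [← Rn_shift γ η hγ hη m, hN, show -(η - 1 / 2) = 1 + -(η + 1 - 1 / 2) by ring, rpow_add hN0, rpow_one]
  ring

set_option maxHeartbeats 1000000 in
lemma mid_bounds (γ η : ℝ) (hγ : -(1 / 2) < γ) (hη : 0 < η) :
    ∃ D, 0 ≤ D ∧ ∀ m : ℕ,
      |cn γ η (m + 1) * ju γ η (m + 1) (π / 2) - wk (Nn γ η (m + 1)) (jh γ η) (γ * π / 2 + π / 4) (π / 2)| ≤ D / Nn γ η (m + 1) ^ 2 ∧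
      |cn γ η (m + 1) * jdu γ η m (π / 2) - wk' (Nn γ η (m + 1)) (jh γ η) (jq γ η) (γ * π / 2 + π / 4) (π / 2)| ≤ D / Nn γ η (m + 1) := by
  obtain ⟨D1, hD1, H1⟩ := mid_asymp γ η hγ hη
  obtain ⟨D2, hD2, H2⟩ := mid_asymp (γ + 1) (η + 1) (by linarith) (by linarith)
  set K := 1 + (γ + η + 1) / 2 with hK
  have hK1 : 1 ≤ K := by rw [hK]; linarith
  set h := (η ^ 2 - γ ^ 2) / 4 with hh
  have hs2 : 0 < √2 := by positivity
  have hjh : jh γ η (π / 2) = h := by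
    unfold jh
    rw [show π / 2 / 2 = π / 4 by ring, sin_pi_div_four, cos_pi_div_four, div_self (by positivity)]
    rw [hh]; ring
  have hja : ja γ η (π / 2) = (γ - η) / 2 := by
    unfold ja
    rw [show π / 2 / 2 = π / 4 by ring, sin_pi_div_four, cos_pi_div_four, div_self (by positivity)]
    ring
  set q := jq γ η (π / 2) with hq
  have hph : ∀ m : ℕ, Nn γ η (m + 1) * (π / 2) - (γ * π / 2 + π / 4) = chi γ η (m + 1) := by
    intro m; unfold Nn chi; push_cast; ring
  set V := |cn γ η (0 + 1) * jdu γ η 0 (π / 2) - wk' (Nn γ η (0 + 1)) (jh γ η) (jq γ η) (γ * π / 2 + π / 4) (π / 2)| with hV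
  have hN1 := Nn_pos γ η hγ hη (0 + 1)
  set a := (γ - η) / 2 with ha
  have hnn : 0 ≤ |a| * D1 * K + |a| * |h| + 4 * K ^ 2 * D2 + |q| / 2 := by positivity
  refine ⟨D1 * K ^ 2 + V * Nn γ η (0 + 1) + (|a| * D1 * K + |a| * |h| + 4 * K ^ 2 * D2 + |q| / 2), by positivity, fun m => ?_⟩
  have hm0 : (0 : ℝ) ≤ m := by positivity
  have hNge : (m : ℝ) + 1 ≤ Nn γ η (m + 1) := by unfold Nn; push_cast; linarith
  have hNle : Nn γ η (m + 1) ≤ K * (m + 1) := by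
    unfold Nn; push_cast; rw [hK]; nlinarith
  have hN0 := Nn_pos γ η hγ hη (m + 1)
  set N := Nn γ η (m + 1) with hN
  have h1 := H1 (m + 1) (by omega)
  push_cast at h1
  rw [← hN] at h1
  have hVN : 0 ≤ V * Nn γ η (0 + 1) := by positivity
  set U := cn γ η (m + 1) * ju γ η (m + 1) (π / 2) with hU
  set c := cos (chi γ η (m + 1)) with hcdef
  set s := sin (chi γ η (m + 1)) with hsdef
  have hc : |c| ≤ 1 := abs_cos_le_one _
  have hs : |s| ≤ 1 := abs_sin_le_one _
  constructor
  · unfold wk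
    rw [hjh, hN, hph, ← hN]
    refine h1.trans ?_
    calc D1 / ((m : ℝ) + 1) ^ 2 = D1 * K ^ 2 / (K * (m + 1)) ^ 2 := by field_simp
      _ ≤ D1 * K ^ 2 / N ^ 2 := by gcongr
      _ ≤ _ := by gcongr; linarith
  · rcases Nat.eq_zero_or_pos m with hm | hm
    · subst hm
      rw [← hV, le_div_iff₀ hN0]
      have : 0 ≤ D1 * K ^ 2 := by positivity
      linarith
    · have hm1 : (1 : ℝ) ≤ m := by exact_mod_cast hm
      have h2 := H2 m hm
      have hN' : Nn (γ + 1) (η + 1) m = N := by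
        rw [hN]; unfold Nn; push_cast; ring
      have hchi : chi (γ + 1) (η + 1) m = chi γ η (m + 1) - π / 2 := by
        unfold chi; push_cast; ring
      rw [hN', hchi, cos_sub_pi_div_two, sin_sub_pi_div_two, ← hcdef, ← hsdef] at h2
      set U' := cn (γ + 1) (η + 1) m * ju (γ + 1) (η + 1) m (π / 2) with hU'
      have hdu : cn γ η (m + 1) * jdu γ η m (π / 2) = a * U - N * U' := by
        unfold jdu
        rw [hja, mul_sub, ← mul_assoc (cn γ η (m + 1)) (_ + _), cn_shift γ η hγ hη m, hU, hU']
        ring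
      have hwk : wk' N (jh γ η) (jq γ η) (γ * π / 2 + π / 4) (π / 2) = -N * s + h * c - q / (2 * N) * s := by
        unfold wk'
        rw [hjh, hN, hph]
      rw [hdu, hwk]
      have e : a * U - N * U' - (-N * s + h * c - q / (2 * N) * s) =
        a * (U - (c + h / N * s)) + a * (h / N * s) + -(N * (U' - (s + ((η + 1) ^ 2 - (γ + 1) ^ 2) / 4 / N * -c))) + q / (2 * N) * s := by
        rw [ha, hh]; field_simp; ring
      rw [e]
      have t1 : |a * (U - (c + h / N * s))| ≤ |a| * D1 * K / N := by
        rw [abs_mul]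
        calc _ ≤ |a| * (D1 / ((m : ℝ) + 1) ^ 2) := by gcongr
          _ ≤ |a| * (D1 / ((m : ℝ) + 1)) := by gcongr; nlinarith
          _ = |a| * (D1 * K / (K * (m + 1))) := by field_simp
          _ ≤ |a| * (D1 * K / N) := by gcongr
          _ = _ := by ring
      have t2 : |a * (h / N * s)| ≤ |a| * |h| / N := by
        rw [abs_mul, abs_mul, abs_div h N, abs_of_pos hN0]
        calc _ ≤ |a| * (|h| / N * 1) := by gcongr
          _ = _ := by ring
      have t3 : |-(N * (U' - (s + ((η + 1) ^ 2 - (γ + 1) ^ 2) / 4 / N * -c)))| ≤ 4 * K ^ 2 * D2 / N := by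
        rw [abs_neg, abs_mul, abs_of_pos hN0]
        calc _ ≤ N * (D2 / (m : ℝ) ^ 2) := by gcongr
          _ = N * (D2 * (4 * K ^ 2) / (K * (2 * m)) ^ 2) := by field_simp; ring
          _ ≤ N * (D2 * (4 * K ^ 2) / N ^ 2) := by
              gcongr
              exact hNle.trans (by gcongr; linarith)
          _ = _ := by field_simp
      have t4 : |q / (2 * N) * s| ≤ |q| / 2 / N := by
        rw [abs_mul, abs_div, abs_of_pos (by positivity : 0 < 2 * N)]
        calc _ ≤ |q| / (2 * N) * 1 := by gcongr
          _ = _ := by field_simp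
      have : |a * (U - (c + h / N * s)) + a * (h / N * s) + -(N * (U' - (s + ((η + 1) ^ 2 - (γ + 1) ^ 2) / 4 / N * -c))) + q / (2 * N) * s|
          ≤ |a| * D1 * K / N + |a| * |h| / N + 4 * K ^ 2 * D2 / N + |q| / 2 / N := by
        refine (abs_add_le _ _).trans (add_le_add ((abs_add_three _ _ _).trans ?_) t4)
        gcongr
      refine this.trans ?_
      rw [← add_div, ← add_div, ← add_div]
      refine div_le_div_of_nonneg_right ?_ hN0.le
      have : 0 ≤ D1 * K ^ 2 := by positivity
      linarith
end

lemma final_bound (γ η : ℝ) (hγ : -(1 / 2) < γ) (hη : 0 < η) (ε : ℝ) (h0 : 0 < ε) (h1 : ε < π / 2) :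
    ∃ C, 0 < C ∧ ∀ m : ℕ, ∀ φ, 0 < φ → φ ≤ π - ε → 1 ≤ Nn γ η (m + 1) * φ →
      |cn γ η (m + 1) * ju γ η (m + 1) φ - wk (Nn γ η (m + 1)) (jh γ η) (γ * π / 2 + π / 4) φ| ≤
        C / (Nn γ η (m + 1) * φ) ^ 2 := by
  have hp := pi_gt_three
  obtain ⟨B, hB, B1, B2, B3⟩ := jhqr_bounds γ η (π - ε) (by linarith) (by linarith)
  obtain ⟨D, hD, H⟩ := mid_bounds γ η hγ hη
  obtain ⟨C, hC, HC⟩ := wkb_main B D (π - ε) (π / 2) hB hD (by linarith) (by linarith)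
  refine ⟨C, hC, fun m => ?_⟩
  have hN1 : 1 ≤ Nn γ η (m + 1) := by
    have : (0 : ℝ) ≤ m := by positivity
    unfold Nn; push_cast; linarith
  refine HC (Nn γ η (m + 1)) (γ * π / 2 + π / 4) (fun φ => cn γ η (m + 1) * ju γ η (m + 1) φ)
    (fun φ => cn γ η (m + 1) * jdu γ η m φ) (jh γ η) (jq γ η) (jr γ η) hN1 ?_ ?_ ?_ ?_ B1 B2 B3 (H m).1 (H m).2
  · intro t ht ht1
    exact (hd_ju γ η (by linarith) (by linarith) m ht (by linarith)).const_mul _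
  · intro t ht ht1
    refine ((hd_jdu γ η (by linarith) (by linarith) m ht (by linarith)).const_mul _).congr_deriv ?_
    unfold Nn
    push_cast
    ring
  · intro t ht ht1
    exact hd_jh γ η ht (by linarith)
  · intro t ht ht1
    exact hd_jq γ η ht (by linarith)

/-- Lemma 2.5 ii): two-term asymptotics of the generalised Dirichlet kernel
`v_L^{(α,β)}(1,cos θ)` for `ε ≤ θ < π − c⁽¹⁾/L`, with `L̃ = L + (α+β+2)/2` and
`θ' = π − θ`; here `c⁽¹⁾ = c⁽¹⁾(α,β) > 0` and `C = C(ε,α,β) > 0`. -/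
theorem dirichletJ_two_term_asymptotics_right (α β : ℝ)
    (hα : -(1 / 2 : ℝ) < α) (hβ : -(1 / 2 : ℝ) < β) (hβα : -3 < β - α) :
    ∃ c : ℝ, 0 < c ∧
      ∀ ε : ℝ, 0 < ε → ε < Real.pi / 2 →
        ∃ C : ℝ, 0 < C ∧
          ∀ L : ℕ, 1 ≤ L → ∀ θ : ℝ, ε ≤ θ → θ < Real.pi - c / (L : ℝ) →
            |dirichletJ α β L 1 (Real.cos θ) -
                (-1 : ℝ) ^ L * (2 : ℝ) ^ (-(α + β + 1)) / Real.Gamma (α + 1) *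
                  ((L : ℝ) + (α + β + 2) / 2) ^ (α + 1 / 2) * mAB β (α + 1) (Real.pi - θ) *
                    (Real.cos (omegaA β (((L : ℝ) + (α + β + 2) / 2) * (Real.pi - θ))) +
                      ((L : ℝ) + (α + β + 2) / 2)⁻¹ * F2fn β (α + 1) (Real.pi - θ) *
                        Real.cos
                          (omegaA (β + 1) (((L : ℝ) + (α + β + 2) / 2) * (Real.pi - θ))))| ≤
              C * ((2 : ℝ) ^ (-(α + β + 1)) / Real.Gamma (α + 1)) *
                ((L : ℝ) + (α + β + 2) / 2) ^ (α + 1 / 2) * mAB β (α + 1) (Real.pi - θ) *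
                  ((L : ℝ) ^ uHat β * (Real.pi - θ) ^ nuHat β +
                    (L : ℝ) ^ (-(2 : ℝ)) * (Real.pi - θ) ^ (-(2 : ℝ))) := by
  refine ⟨1, one_pos, fun ε hε hε2 => ?_⟩
  obtain ⟨C, hC, H⟩ := final_bound β (α + 1) hβ (by linarith) ε hε hε2
  refine ⟨C, hC, fun L hL θ hθ1 hθ2 => ?_⟩
  obtain ⟨m, rfl⟩ : ∃ m, L = m + 1 := ⟨L - 1, by omega⟩
  have hL1 : (1 : ℝ) ≤ ((m + 1 : ℕ) : ℝ) := by exact_mod_cast hL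
  have hL0 : (0 : ℝ) < ((m + 1 : ℕ) : ℝ) := by linarith
  obtain ⟨φ, hφ⟩ : ∃ φ, φ = π - θ := ⟨_, rfl⟩
  have hθ : θ = π - φ := by rw [hφ]; ring
  subst hθ
  rw [show π - (π - φ) = φ by ring]
  have hφL : 1 / ((m + 1 : ℕ) : ℝ) < φ := by linarith
  have hφ0 : 0 < φ := lt_trans (by positivity) hφL
  have hφ1 : φ < π := by linarith
  have hLφ : 1 < ((m + 1 : ℕ) : ℝ) * φ := by
    rw [div_lt_iff₀ hL0] at hφL; linarith
  have hNe : ((m + 1 : ℕ) : ℝ) + (α + β + 2) / 2 = Nn β (α + 1) (m + 1) := by unfold Nn; ring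
  rw [hNe]
  have hLN : ((m + 1 : ℕ) : ℝ) ≤ Nn β (α + 1) (m + 1) := by unfold Nn; linarith
  have hN0 : 0 < Nn β (α + 1) (m + 1) := by linarith
  have hb := H m φ hφ0 (by linarith) (by nlinarith)
  rw [dirichletJ_eq α β hα hβ, cos_pi_sub, jacobiP_neg]
  obtain ⟨hs, hc⟩ := sc_half_pos hφ0 hφ1
  have hK2 : 0 < (2 : ℝ) ^ (-(α + β + 1)) / Real.Gamma (α + 1) :=
    div_pos (by positivity) (Real.Gamma_pos_of_pos (by linarith))
  have hm0 : 0 < mAB β (α + 1) φ := by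
    have := pi_pos
    unfold mAB; positivity
  have hR : Real.Gamma (((m + 1 : ℕ) : ℝ) + α + β + 2) / Real.Gamma (((m + 1 : ℕ) : ℝ) + β + 1) = Rn β (α + 1) (m + 1) := by
    unfold Rn
    rw [show ((m + 1 : ℕ) : ℝ) + α + β + 2 = ((m + 1 : ℕ) : ℝ) + β + (α + 1) + 1 by ring]
  have hRP : Rn β (α + 1) (m + 1) * jacobiP β (α + 1) (m + 1) (cos φ) =
      Nn β (α + 1) (m + 1) ^ (α + 1 / 2) * mAB β (α + 1) φ * (cn β (α + 1) (m + 1) * ju β (α + 1) (m + 1) φ) := by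
    unfold cn ju jw mAB
    have p1 : √π * π ^ (-(1 / 2 : ℝ)) = 1 := by
      rw [sqrt_eq_rpow, ← rpow_add pi_pos]; norm_num
    have p2 : Nn β (α + 1) (m + 1) ^ (α + 1 / 2) * Nn β (α + 1) (m + 1) ^ (-(α + 1 - 1 / 2)) = 1 := by
      rw [← rpow_add hN0, show α + 1 / 2 + -(α + 1 - 1 / 2) = 0 by ring, rpow_zero]
    have p3 : sin (φ / 2) ^ (-β - 1 / 2) * sin (φ / 2) ^ (β + 1 / 2) = 1 := by
      rw [← rpow_add hs, show -β - 1 / 2 + (β + 1 / 2) = 0 by ring, rpow_zero]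
    have p4 : cos (φ / 2) ^ (-(α + 1) - 1 / 2) * cos (φ / 2) ^ (α + 1 + 1 / 2) = 1 := by
      rw [← rpow_add hc, show -(α + 1) - 1 / 2 + (α + 1 + 1 / 2) = 0 by ring, rpow_zero]
    calc _ = Rn β (α + 1) (m + 1) * jacobiP β (α + 1) (m + 1) (cos φ) * (√π * π ^ (-(1 / 2 : ℝ))) *
          (Nn β (α + 1) (m + 1) ^ (α + 1 / 2) * Nn β (α + 1) (m + 1) ^ (-(α + 1 - 1 / 2))) *
          (sin (φ / 2) ^ (-β - 1 / 2) * sin (φ / 2) ^ (β + 1 / 2)) *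
          (cos (φ / 2) ^ (-(α + 1) - 1 / 2) * cos (φ / 2) ^ (α + 1 + 1 / 2)) := by rw [p1, p2, p3, p4]; ring
      _ = _ := by ring
  have hwk : cos (omegaA β (Nn β (α + 1) (m + 1) * φ)) +
      (Nn β (α + 1) (m + 1))⁻¹ * F2fn β (α + 1) φ * cos (omegaA (β + 1) (Nn β (α + 1) (m + 1) * φ)) =
      wk (Nn β (α + 1) (m + 1)) (jh β (α + 1)) (β * π / 2 + π / 4) φ := by
    unfold wk omegaA
    rw [F2fn_eq_jh β (α + 1) hφ0 hφ1, ← cos_sub_pi_div_two (_ - (β * π / 2 + π / 4))]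
    rw [show Nn β (α + 1) (m + 1) * φ - β * π / 2 - π / 4 = Nn β (α + 1) (m + 1) * φ - (β * π / 2 + π / 4) by ring,
      show Nn β (α + 1) (m + 1) * φ - (β + 1) * π / 2 - π / 4 = Nn β (α + 1) (m + 1) * φ - (β * π / 2 + π / 4) - π / 2 by ring]
    ring
  rw [hwk, hR]
  set W := (2 : ℝ) ^ (-(α + β + 1)) / Real.Gamma (α + 1) * Nn β (α + 1) (m + 1) ^ (α + 1 / 2) * mAB β (α + 1) φ with hW
  have hW0 : 0 ≤ W := by positivity
  set w := wk (Nn β (α + 1) (m + 1)) (jh β (α + 1)) (β * π / 2 + π / 4) φ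
  set u := cn β (α + 1) (m + 1) * ju β (α + 1) (m + 1) φ
  have e1 : (2 : ℝ) ^ (-(α + β + 1)) / Real.Gamma (α + 1) *
      (Rn β (α + 1) (m + 1) * ((-1) ^ (m + 1) * jacobiP β (α + 1) (m + 1) (cos φ))) = (-1) ^ (m + 1) * (W * u) := by
    rw [hW]
    linear_combination ((2 : ℝ) ^ (-(α + β + 1)) / Real.Gamma (α + 1) * (-1) ^ (m + 1)) * hRP
  have e2 : (-1 : ℝ) ^ (m + 1) * 2 ^ (-(α + β + 1)) / Real.Gamma (α + 1) * Nn β (α + 1) (m + 1) ^ (α + 1 / 2) *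
      mAB β (α + 1) φ * w = (-1) ^ (m + 1) * (W * w) := by
    rw [hW]; ring
  have e3 : C * ((2 : ℝ) ^ (-(α + β + 1)) / Real.Gamma (α + 1)) * Nn β (α + 1) (m + 1) ^ (α + 1 / 2) *
      mAB β (α + 1) φ = W * C := by
    rw [hW]; ring
  rw [e1, e2, e3, ← mul_sub, ← mul_sub, abs_mul, abs_pow, abs_neg, abs_one, one_pow, one_mul, abs_mul, abs_of_nonneg hW0,
    mul_assoc W C]
  refine mul_le_mul_of_nonneg_left (hb.trans ?_) hW0
  have hA : 0 ≤ ((m + 1 : ℕ) : ℝ) ^ uHat β * φ ^ nuHat β := by positivity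
  have hB : C / (Nn β (α + 1) (m + 1) * φ) ^ 2 ≤ C * (((m + 1 : ℕ) : ℝ) ^ (-(2 : ℝ)) * φ ^ (-(2 : ℝ))) := by
    rw [rpow_neg hL0.le, rpow_neg hφ0.le, rpow_two, rpow_two, ← mul_inv, ← mul_pow, ← div_eq_mul_inv]
    gcongr
  refine hB.trans ?_
  gcongr
  linarith
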